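/- arXiv:1806.04369 — 2 statements merged into one kernel-verified Lean document; each statement's English description precedes it below -/
import Mathlib

section
/- Let p be an odd prime and let d, e, h, f be positive integers with h − d ≤ f < d < h < e. Then the order of the automorphism group of M₃(p,d,e,h,f) equals p^{2d+e+2f−h}. -/
/-- Relators for the group `M₁(p,d,e,f) = ⟨a, b ∣ a^(p^e) = b^(p^d) = 1, b⁻¹ab = a^(1+p^f)⟩`,
where `a` is generator `0` and `b` is generator `1`. -/
def M1rels (p d e f : ℕ) : Set (FreeGroup (Fin 2)) :=
  {FreeGroup.of 0 ^ p ^ e, FreeGroup.of 1 ^ p ^ d,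
    (FreeGroup.of 1)⁻¹ * FreeGroup.of 0 * FreeGroup.of 1 * (FreeGroup.of 0 ^ (1 + p ^ f))⁻¹}

/-- The metacyclic group `M₁(p,d,e,f) = ⟨a, b ∣ a^(p^e) = b^(p^d) = 1, b⁻¹ab = a^(1+p^f)⟩`. -/
abbrev M1 (p d e f : ℕ) : Type := PresentedGroup (M1rels p d e f)

/-- The canonical generator `a` of `M₁(p,d,e,f)`. -/
def M1a (p d e f : ℕ) : M1 p d e f := PresentedGroup.of 0

/-- The canonical generator `b` of `M₁(p,d,e,f)`. -/
def M1b (p d e f : ℕ) : M1 p d e f := PresentedGroup.of 1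

/-- Relators for the group `M₂(p,d,e,f) = ⟨a, b ∣ a^(p^d) = b^(p^e) = 1, b⁻¹ab = a^(1+p^f)⟩`,
where `a` is generator `0` and `b` is generator `1`. -/
def M2rels (p d e f : ℕ) : Set (FreeGroup (Fin 2)) :=
  {FreeGroup.of 0 ^ p ^ d, FreeGroup.of 1 ^ p ^ e,
    (FreeGroup.of 1)⁻¹ * FreeGroup.of 0 * FreeGroup.of 1 * (FreeGroup.of 0 ^ (1 + p ^ f))⁻¹}

/-- The metacyclic group `M₂(p,d,e,f) = ⟨a, b ∣ a^(p^d) = b^(p^e) = 1, b⁻¹ab = a^(1+p^f)⟩`. -/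
abbrev M2 (p d e f : ℕ) : Type := PresentedGroup (M2rels p d e f)

/-- The canonical generator `a` of `M₂(p,d,e,f)`. -/
def M2a (p d e f : ℕ) : M2 p d e f := PresentedGroup.of 0

/-- The canonical generator `b` of `M₂(p,d,e,f)`. -/
def M2b (p d e f : ℕ) : M2 p d e f := PresentedGroup.of 1

/-- Relators for the group
`M₃(p,d,e,h,f) = ⟨a, b ∣ a^(p^h) = 1, b^(p^(d+e-h)) = a^(p^d), b⁻¹ab = a^(1+p^f)⟩`,
where `a` is generator `0` and `b` is generator `1`. -/
def M3rels (p d e h f : ℕ) : Set (FreeGroup (Fin 2)) :=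
  {FreeGroup.of 0 ^ p ^ h, FreeGroup.of 1 ^ p ^ (d + e - h) * (FreeGroup.of 0 ^ p ^ d)⁻¹,
    (FreeGroup.of 1)⁻¹ * FreeGroup.of 0 * FreeGroup.of 1 * (FreeGroup.of 0 ^ (1 + p ^ f))⁻¹}

/-- The non-split metacyclic group
`M₃(p,d,e,h,f) = ⟨a, b ∣ a^(p^h) = 1, b^(p^(d+e-h)) = a^(p^d), b⁻¹ab = a^(1+p^f)⟩`. -/
abbrev M3 (p d e h f : ℕ) : Type := PresentedGroup (M3rels p d e h f)

/-- The canonical generator `a` of `M₃(p,d,e,h,f)`. -/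
def M3a (p d e h f : ℕ) : M3 p d e h f := PresentedGroup.of 0

/-- The canonical generator `b` of `M₃(p,d,e,h,f)`. -/
def M3b (p d e h f : ℕ) : M3 p d e h f := PresentedGroup.of 1

/-- `(α, β)` is an exact `(m,n)`-bicyclic pair of `G`: `α` has order `m`, `β` has order `n`,
`⟨α⟩ ∩ ⟨β⟩ = 1`, and `G = ⟨α⟩⟨β⟩`. -/
def IsExactBicyclicPair {G : Type*} [Group G] (m n : ℕ) (α β : G) : Prop :=
  orderOf α = m ∧ orderOf β = n ∧
    Subgroup.zpowers α ⊓ Subgroup.zpowers β = ⊥ ∧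
    ∀ g : G, ∃ i j : ℤ, g = α ^ i * β ^ j

theorem geomSum_mul_range {R : Type*} [CommSemiring R] (q : R) (k m : ℕ) :
    ∑ l ∈ Finset.range (k * m), q ^ l =
      (∑ l ∈ Finset.range k, q ^ l) * ∑ i ∈ Finset.range m, (q ^ k) ^ i := by
  induction m with
  | zero => simp
  | succ m ih =>
    rw [Nat.mul_succ, Finset.sum_range_add, ih, Finset.sum_range_succ, mul_add, ← pow_mul]
    simp only [pow_add, ← Finset.mul_sum]
    ring

theorem dvd_geomSum_sub {q m : ℤ} (hq : m ∣ q - 1) (k : ℕ) :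
    m ∣ ∑ l ∈ Finset.range k, q ^ l - k := by
  have h : ∑ l ∈ Finset.range k, q ^ l - k = ∑ l ∈ Finset.range k, (q ^ l - 1) := by simp
  rw [h]
  exact Finset.dvd_sum fun l _ => hq.trans (sub_one_dvd_pow_sub_one q l)

theorem prime_pow_succ_dvd_geomSum_sub {p c : ℕ} (hodd : Odd p) (hc : 0 < c) {q : ℤ}
    (hq : (p : ℤ) ^ c ∣ q - 1) :
    (p : ℤ) ^ (c + 1) ∣ ∑ l ∈ Finset.range p, q ^ l - p := by
  have hpq : (p : ℤ) ∣ q - 1 := (dvd_pow_self _ hc.ne').trans hq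
  have h : ∑ l ∈ Finset.range p, q ^ l - p =
      (q - 1) * ∑ l ∈ Finset.range p, ∑ i ∈ Finset.range l, q ^ i := by
    rw [Finset.mul_sum]
    simp only [mul_comm (q - 1), geom_sum_mul]
    simp
  rw [h, pow_succ]
  refine mul_dvd_mul hq ?_
  have h1 : (p : ℤ) ∣ ∑ l ∈ Finset.range p, (∑ i ∈ Finset.range l, q ^ i - l) :=
    Finset.dvd_sum fun l _ => dvd_geomSum_sub hpq l
  have h2 : (p : ℤ) ∣ ∑ l ∈ Finset.range p, (l : ℤ) := by
    obtain ⟨k, hk⟩ := hodd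
    have h3 := Finset.sum_range_id_mul_two p
    have h4 : ∑ i ∈ Finset.range p, i = p * k := by
      have : p - 1 = 2 * k := by omega
      rw [this] at h3
      nlinarith
    rw [← Nat.cast_sum, h4]
    exact ⟨k, by push_cast; ring⟩
  simpa using dvd_add h1 h2

theorem prime_pow_dvd_geomSum_sub {p c : ℕ} (hodd : Odd p) (hc : 0 < c) {q : ℤ}
    (hq : (p : ℤ) ^ c ∣ q - 1) (m : ℕ) :
    (p : ℤ) ^ (m + c) ∣ ∑ l ∈ Finset.range (p ^ m), q ^ l - p ^ m := by
  induction m with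
  | zero => simp
  | succ m ih =>
    obtain ⟨x, hx⟩ := ih
    obtain ⟨y, hy⟩ := prime_pow_succ_dvd_geomSum_sub hodd hc
      (hq.trans (sub_one_dvd_pow_sub_one q (p ^ m)))
    refine ⟨x + y + p ^ c * x * y, ?_⟩
    rw [pow_succ, geomSum_mul_range, sub_eq_iff_eq_add.mp hx, sub_eq_iff_eq_add.mp hy]
    ring

theorem prime_pow_dvd_pow_sub {p f : ℕ} (hodd : Odd p) (hf : 0 < f) (m s : ℕ) :
    (p : ℤ) ^ (m + 2 * f) ∣ (1 + (p : ℤ) ^ f) ^ (p ^ m * s) - (1 + s * (p : ℤ) ^ (m + f)) := by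
  obtain ⟨x, hx⟩ := prime_pow_dvd_geomSum_sub (q := 1 + (p : ℤ) ^ f) hodd hf (by simp) m
  have hX : (1 + (p : ℤ) ^ f) ^ p ^ m = 1 + (p : ℤ) ^ (m + f) + (p : ℤ) ^ (m + 2 * f) * x := by
    have := geom_sum_mul (1 + (p : ℤ) ^ f) (p ^ m)
    rw [sub_eq_iff_eq_add.mp hx] at this
    linear_combination -this
  rw [pow_mul, hX]
  induction s with
  | zero => simp
  | succ s ih =>
    obtain ⟨y, hy⟩ := ih
    rw [pow_succ, sub_eq_iff_eq_add.mp hy]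
    refine ⟨y * (1 + (p : ℤ) ^ (m + f) + (p : ℤ) ^ (m + 2 * f) * x)
      + (1 + s * (p : ℤ) ^ (m + f)) * x + s * (p : ℤ) ^ m, ?_⟩
    push_cast
    ring

theorem prime_pow_dvd_pow_sub_one_iff {p f : ℕ} (hp : p.Prime) (hodd : Odd p) (hf : 0 < f)
    (k i : ℕ) : (p : ℤ) ^ (f + k) ∣ (1 + (p : ℤ) ^ f) ^ i - 1 ↔ p ^ k ∣ i := by
  have hpf : (p : ℤ) ∣ (p : ℤ) ^ f := dvd_pow_self _ hf.ne'
  have h1 : ¬ (p : ℤ) ∣ 1 + (p : ℤ) ^ f := fun h =>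
    (Nat.prime_iff_prime_int.mp hp).not_dvd_one ((dvd_add_left hpf).mp h)
  have h := Int.emultiplicity_pow_sub_pow hp hodd (x := 1 + (p : ℤ) ^ f) (y := 1)
    (by simpa using hpf) h1 i
  have h2 : emultiplicity (p : ℤ) ((p : ℤ) ^ f) = f :=
    emultiplicity_pow_self (by exact_mod_cast hp.ne_zero)
      (Nat.prime_iff_prime_int.mp hp).not_isUnit f
  rw [one_pow, add_sub_cancel_left, h2] at h
  rw [pow_dvd_iff_le_emultiplicity, pow_dvd_iff_le_emultiplicity, h, Nat.cast_add,
    ENat.add_le_add_iff_left (ENat.natCast_ne_top f)]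

theorem card_filter_range_dvd_sub {N M : ℕ} (hM : 0 < M) (h : M ∣ N) (c : ℤ) :
    ((Finset.range N).filter fun x : ℕ => (M : ℤ) ∣ x - c).card = N / M := by
  have hM' : (M : ℤ) ≠ 0 := by exact_mod_cast hM.ne'
  have h1 := Nat.count_modEq_card N hM (c % M).toNat
  rw [Nat.mod_eq_zero_of_dvd h, if_neg (Nat.not_lt_zero _), add_zero,
    Nat.count_eq_card_filter_range] at h1
  rw [← h1]
  congr 1
  ext x
  simp only [Finset.mem_filter, Finset.mem_range, and_congr_right_iff]
  intro _
  rw [← Int.natCast_modEq_iff, Int.toNat_of_nonneg (Int.emod_nonneg _ hM'), Int.modEq_comm,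
    Int.modEq_iff_dvd]
  have h2 : (x : ℤ) - c % M = (x - c) + M * (c / M) := by
    linear_combination -(Int.emod_add_mul_ediv c M)
  rw [h2, dvd_add_left (dvd_mul_right _ _)]

section Model

/-- Multiplication by powers of the unit `u`, as an action of `ℤ` on the additive group of
`ZMod N`. -/
def unitAction {N : ℕ} (u : (ZMod N)ˣ) :
    Multiplicative ℤ →* MulAut (Multiplicative (ZMod N)) :=
  (MulAutMultiplicative (ZMod N)).symm.toMonoidHom.comp
    (AddAut.mulLeft.comp (zpowersHom (ZMod N)ˣ u))

theorem unitAction_apply {N : ℕ} (u : (ZMod N)ˣ) (j : Multiplicative ℤ)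
    (x : Multiplicative (ZMod N)) :
    unitAction u j x = Multiplicative.ofAdd (((u ^ j.toAdd : (ZMod N)ˣ) : ZMod N) * x.toAdd) :=
  rfl

open Multiplicative SemidirectProduct in
/-- The central element `b ^ n * a⁻ᵐ` that is killed in the metacyclic quotient. -/
def centralElt {N : ℕ} (u : (ZMod N)ˣ) (n m : ℤ) :
    Multiplicative (ZMod N) ⋊[unitAction u] Multiplicative ℤ :=
  inl (ofAdd (-(m : ZMod N))) * inr (ofAdd n)

open Multiplicative SemidirectProduct in
theorem centralElt_comm {N : ℕ} {u : (ZMod N)ˣ} {n m : ℤ} (hn : u ^ n = 1)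
    (hm : ((u : ZMod N) - 1) * m = 0)
    (g : Multiplicative (ZMod N) ⋊[unitAction u] Multiplicative ℤ) :
    centralElt u n m * g = g * centralElt u n m := by
  have hu : ∀ k : ℤ, ((u ^ k : (ZMod N)ˣ) : ZMod N) * m = m := by
    have h1 : (u : ZMod N) * m = m := by linear_combination hm
    have h2 : ((u⁻¹ : (ZMod N)ˣ) : ZMod N) * m = m := by
      conv_lhs => rw [← h1, ← mul_assoc, Units.inv_mul, one_mul]
    intro k
    induction k with
    | zero => simp
    | succ k ih => rw [zpow_add_one, Units.val_mul, mul_assoc, h1, ih]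
    | pred k ih => rw [zpow_sub_one, Units.val_mul, mul_assoc, h2, ih]
  apply SemidirectProduct.ext
  · apply toAdd.injective
    simp [centralElt, unitAction_apply, hn, hu, add_comm]
  · simp [centralElt, mul_comm]

open Multiplicative SemidirectProduct in
theorem inr_mul_inl_mem_zpowers_centralElt {N : ℕ} {u : (ZMod N)ˣ} {n m : ℤ} (hn : u ^ n = 1)
    {i j : ℤ} (h : inr (ofAdd j) * inl (ofAdd (i : ZMod N)) ∈
      Subgroup.zpowers (centralElt u n m)) :
    ∃ k : ℤ, j = k * n ∧ (N : ℤ) ∣ i + k * m := by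
  obtain ⟨k, hk⟩ := Subgroup.mem_zpowers_iff.mp h
  have hc : Commute (inl (ofAdd (-(m : ZMod N))) :
      Multiplicative (ZMod N) ⋊[unitAction u] Multiplicative ℤ) (inr (ofAdd n)) := by
    apply SemidirectProduct.ext
    · apply toAdd.injective
      simp [unitAction_apply, hn]
    · simp
  rw [centralElt, hc.mul_zpow, ← map_zpow inl, ← map_zpow inr, ← ofAdd_zsmul, ← ofAdd_zsmul] at hk
  have hr : k * n = j := by
    simpa only [mul_right, right_inl, right_inr, one_mul, mul_one, toAdd_ofAdd, smul_eq_mul]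
      using congrArg (fun g => toAdd g.right) hk
  have hun : u ^ (k * n) = 1 := by rw [mul_comm, zpow_mul, hn, one_zpow]
  have hl : k • (-(m : ZMod N)) = i := by
    simpa only [mul_left, left_inl, left_inr, right_inl, right_inr, map_one, mul_one, one_mul,
      unitAction_apply, toAdd_ofAdd, ← hr, hun, Units.val_one]
      using congrArg (fun g => toAdd g.left) hk
  rw [zsmul_eq_mul] at hl
  refine ⟨k, hr.symm, (ZMod.intCast_zmod_eq_zero_iff_dvd _ N).mp ?_⟩
  push_cast
  linear_combination -hl

end Model

/-- The numerical hypotheses on the parameters of `M₃`, where `p ^ n` is the order of `b` modulo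
`⟨a⟩`. -/
structure M3Params (p d n h f : ℕ) : Prop where
  prime : p.Prime
  odd : Odd p
  f_pos : 0 < f
  f_lt_d : f < d
  d_lt_h : d < h
  h_le : h ≤ d + f
  d_lt_n : d < n

/-- `a` and `b` satisfy the relations of `M₃`, and every element of `G` has an essentially unique
expression `b ^ j * a ^ i`. -/
structure IsM3Basis {G : Type*} [Group G] (p d n h f : ℕ) (a b : G) : Prop where
  a_pow : a ^ p ^ h = 1
  b_pow : b ^ p ^ n = a ^ p ^ d
  a_mul_b : a * b = b * a ^ (1 + p ^ f)
  exists_of_eq_one : ∀ i j : ℤ, b ^ j * a ^ i = 1 →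
    ∃ k : ℤ, j = k * p ^ n ∧ (p : ℤ) ^ h ∣ i + k * p ^ d
  exists_eq : ∀ g : G, ∃ j i : ℕ, g = b ^ j * a ^ i

section Commutation

variable {G : Type*} [Group G] {a b : G} {r : ℕ}

theorem pow_mul_pow_eq_of_conj (hab : a * b = b * a ^ r) (i j : ℕ) :
    a ^ i * b ^ j = b ^ j * a ^ (i * r ^ j) := by
  have h1 : ∀ i, a ^ i * b = b * a ^ (i * r) := fun i => by
    have := SemiconjBy.pow_right (show SemiconjBy b (a ^ r) a from hab.symm) i
    rw [mul_comm i, pow_mul]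
    exact this.symm
  induction j generalizing i with
  | zero => simp
  | succ j ih =>
    rw [pow_succ, ← mul_assoc, ih, mul_assoc, h1, ← mul_assoc, ← pow_succ, mul_assoc i]
    rfl

theorem mul_pow_mul_pow_of_conj (hab : a * b = b * a ^ r) (j i j' i' : ℕ) :
    b ^ j * a ^ i * (b ^ j' * a ^ i') = b ^ (j + j') * a ^ (i * r ^ j' + i') := by
  rw [mul_assoc, ← mul_assoc (a ^ i), pow_mul_pow_eq_of_conj hab, pow_add, pow_add]
  simp only [mul_assoc]

theorem mul_pow_pow_of_conj (hab : a * b = b * a ^ r) (j i k : ℕ) :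
    (b ^ j * a ^ i) ^ k = b ^ (j * k) * a ^ (i * ∑ l ∈ Finset.range k, (r ^ j) ^ l) := by
  induction k with
  | zero => simp
  | succ k ih =>
    rw [pow_succ', ih, mul_pow_mul_pow_of_conj hab, Finset.sum_range_succ]
    congr 2 <;> ring

end Commutation

/-- The congruences on the exponents characterising the pairs
`(b ^ (p ^ (n - f) * s) * a ^ t, b ^ u * a ^ v)` that are images of `(a, b)` under
automorphisms. -/
def AutCond (p d n h f u v s t : ℕ) : Prop :=
  ¬ p ∣ t ∧
  (p : ℤ) ^ h ∣ u * p ^ d + v * p ^ n - (s * p ^ (d + (d - f)) + t * p ^ d) ∧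
  (p : ℤ) ^ h ∣ t * ((1 + p ^ f) ^ u - (1 + p ^ f)) - (s * p ^ d + v * s * p ^ n)

namespace IsM3Basis

variable {G : Type*} [Group G] {a b : G} {p d n h f : ℕ}

theorem zpow_eq_one (H : IsM3Basis p d n h f a b) {i : ℤ} (hi : (p : ℤ) ^ h ∣ i) :
    a ^ i = 1 := by
  obtain ⟨k, rfl⟩ := hi
  rw [zpow_mul, ← Nat.cast_pow, zpow_natCast, H.a_pow, one_zpow]

theorem zpow_mul_zpow_eq_one_iff (H : IsM3Basis p d n h f a b) (i j : ℤ) :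
    b ^ j * a ^ i = 1 ↔ ∃ k : ℤ, j = k * p ^ n ∧ (p : ℤ) ^ h ∣ i + k * p ^ d := by
  refine ⟨H.exists_of_eq_one i j, ?_⟩
  rintro ⟨k, rfl, hk⟩
  have hb : b ^ (k * (p : ℤ) ^ n) = a ^ (k * (p : ℤ) ^ d) := by
    rw [mul_comm, mul_comm k, zpow_mul, zpow_mul, ← Nat.cast_pow, ← Nat.cast_pow, zpow_natCast,
      zpow_natCast, H.b_pow]
  rw [hb, ← zpow_add, add_comm]
  exact H.zpow_eq_one hk

theorem eq_iff (H : IsM3Basis p d n h f a b) (j i j' i' : ℕ) :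
    b ^ j * a ^ i = b ^ j' * a ^ i' ↔
      ∃ k : ℤ, (j : ℤ) - j' = k * p ^ n ∧ (p : ℤ) ^ h ∣ i - i' + k * p ^ d := by
  rw [← H.zpow_mul_zpow_eq_one_iff, zpow_sub, zpow_sub, ← mul_inv_eq_one,
    ← conj_eq_one_iff (a := (b ^ j')⁻¹)]
  simp only [zpow_natCast]
  refine Eq.congr_left ?_
  have hb : Commute (b ^ j) (b ^ j')⁻¹ := ((Commute.refl b).pow_pow _ _).inv_right
  rw [hb.eq]
  group

theorem pow_eq_pow_iff (H : IsM3Basis p d n h f a b) (hp : p ≠ 0) (i i' : ℕ) :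
    a ^ i = a ^ i' ↔ (p : ℤ) ^ h ∣ i - i' := by
  have h1 := H.eq_iff 0 i 0 i'
  simp only [pow_zero, one_mul] at h1
  rw [h1]
  constructor
  · rintro ⟨k, hk, hk'⟩
    have hpn : (p : ℤ) ^ n ≠ 0 := pow_ne_zero _ (by exact_mod_cast hp)
    obtain rfl : k = 0 := by simpa [hpn] using hk.symm
    simpa using hk'
  · exact fun hi => ⟨0, by simp, by simpa using hi⟩

theorem b_pow_mul (H : IsM3Basis p d n h f a b) (k : ℕ) : b ^ (k * p ^ n) = a ^ (k * p ^ d) := by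
  rw [mul_comm, pow_mul, H.b_pow, ← pow_mul, mul_comm]

theorem exists_lt_eq (H : IsM3Basis p d n h f a b) (hp : p ≠ 0) (g : G) :
    ∃ j i : ℕ, j < p ^ n ∧ i < p ^ h ∧ g = b ^ j * a ^ i := by
  obtain ⟨j, i, rfl⟩ := H.exists_eq g
  refine ⟨j % p ^ n, (i + j / p ^ n * p ^ d) % p ^ h, Nat.mod_lt _ (by positivity),
    Nat.mod_lt _ (by positivity), ?_⟩
  rw [H.eq_iff]
  refine ⟨j / p ^ n, ?_, ?_⟩
  · have := Nat.mod_add_div j (p ^ n)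
    zify at this ⊢
    linear_combination -this
  · have := Nat.mod_add_div (i + j / p ^ n * p ^ d) (p ^ h)
    zify at this ⊢
    exact ⟨(i + j / p ^ n * p ^ d) / p ^ h, by linear_combination -this⟩

theorem eq_and_eq_of_lt (H : IsM3Basis p d n h f a b) {j i j' i' : ℕ}
    (hj : j < p ^ n) (hj' : j' < p ^ n) (hi : i < p ^ h) (hi' : i' < p ^ h)
    (he : b ^ j * a ^ i = b ^ j' * a ^ i') : j = j' ∧ i = i' := by
  obtain ⟨k, hk, hk'⟩ := (H.eq_iff _ _ _ _).mp he
  have h1 : j' ≡ j [MOD p ^ n] := by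
    rw [Nat.modEq_iff_dvd]
    exact ⟨k, by push_cast; linear_combination hk⟩
  obtain rfl : j' = j := h1.eq_of_lt_of_lt hj' hj
  have hpn : (p : ℤ) ^ n ≠ 0 := by exact_mod_cast (Nat.zero_lt_of_lt hj).ne'
  obtain rfl : k = 0 := by simpa [hpn] using hk.symm
  have h2 : i' ≡ i [MOD p ^ h] := by
    rw [Nat.modEq_iff_dvd]
    simpa using hk'
  exact ⟨rfl, (h2.eq_of_lt_of_lt hi' hi).symm⟩

/-- The `p ^ m`-th power of `b ^ j * a ^ t` when `p ^ (n - f) ∣ j` and `f ≤ m`. -/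
theorem x_pow (H : IsM3Basis p d n h f a b) (P : M3Params p d n h f) (s t m : ℕ) (hm : f ≤ m) :
    (b ^ (p ^ (n - f) * s) * a ^ t) ^ p ^ m = a ^ (s * p ^ (d + (m - f)) + t * p ^ m) := by
  obtain ⟨hp, hodd, hf, hfd, hdh, hh, hdn⟩ := P
  have h1 : p ^ (n - f) * s * p ^ m = s * p ^ (m - f) * p ^ n := by
    have : p ^ (n - f) * p ^ m = p ^ (m - f) * p ^ n := by
      rw [← pow_add, ← pow_add]; congr 1; omega
    linear_combination s * this
  rw [mul_pow_pow_of_conj H.a_mul_b, h1, H.b_pow_mul, ← pow_add, H.pow_eq_pow_iff hp.ne_zero]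
  have h2 : (p : ℤ) ^ n ∣ ((1 + p ^ f) ^ (p ^ (n - f) * s) : ℤ) - 1 := by
    have := (prime_pow_dvd_pow_sub_one_iff hp hodd hf (n - f) (p ^ (n - f) * s)).mpr
      (dvd_mul_right _ _)
    rwa [show f + (n - f) = n by omega] at this
  have h3 := prime_pow_dvd_geomSum_sub hodd (by omega) h2 m
  push_cast
  refine ((pow_dvd_pow (p : ℤ) (by omega : h ≤ m + n)).trans h3).trans ⟨t, ?_⟩
  rw [pow_add]
  ring

/-- The `p ^ n`-th power of an arbitrary element. -/
theorem y_pow (H : IsM3Basis p d n h f a b) (P : M3Params p d n h f) (u v : ℕ) :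
    (b ^ u * a ^ v) ^ p ^ n = a ^ (u * p ^ d + v * p ^ n) := by
  obtain ⟨hp, hodd, hf, hfd, hdh, hh, hdn⟩ := P
  rw [mul_pow_pow_of_conj H.a_mul_b, H.b_pow_mul, ← pow_add, H.pow_eq_pow_iff hp.ne_zero]
  have h2 : (p : ℤ) ^ f ∣ ((1 + p ^ f) ^ u : ℤ) - 1 := by
    simpa using sub_one_dvd_pow_sub_one (1 + (p : ℤ) ^ f) u
  have h3 := prime_pow_dvd_geomSum_sub hodd hf h2 n
  push_cast
  exact ((pow_dvd_pow (p : ℤ) (by omega : h ≤ n + f)).trans h3).trans ⟨v, by ring⟩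

/-- The conjugation relation, in terms of exponents. -/
theorem x_mul_y_iff (H : IsM3Basis p d n h f a b) (P : M3Params p d n h f) (u v s t : ℕ) :
    b ^ (p ^ (n - f) * s) * a ^ t * (b ^ u * a ^ v) =
        b ^ u * a ^ v * (b ^ (p ^ (n - f) * s) * a ^ t) ^ (1 + p ^ f) ↔
      (p : ℤ) ^ h ∣ t * ((1 + p ^ f) ^ u - (1 + p ^ f)) - (s * p ^ d + v * s * p ^ n) := by
  have hx := H.x_pow P s t f le_rfl
  obtain ⟨hp, hodd, hf, hfd, hdh, hh, hdn⟩ := P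
  rw [pow_add, pow_one, hx, ← mul_assoc (b ^ u * a ^ v), mul_pow_mul_pow_of_conj H.a_mul_b,
    mul_pow_mul_pow_of_conj H.a_mul_b, mul_assoc, ← pow_add, add_comm u, mul_right_inj,
    H.pow_eq_pow_iff hp.ne_zero]
  have h1 := prime_pow_dvd_pow_sub (p := p) hodd hf (n - f) s
  obtain ⟨y, hy⟩ := (pow_dvd_pow (p : ℤ) (by omega : h ≤ n - f + 2 * f)).trans h1
  rw [show n - f + f = n by omega] at hy
  rw [show d + (f - f) = d by omega]
  push_cast
  rw [sub_eq_iff_eq_add.mp hy, ← dvd_add_left (c := (p : ℤ) ^ h * (v * y)) (dvd_mul_right _ _)]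
  refine Eq.to_iff (congrArg _ ?_)
  ring

theorem relations_iff (H : IsM3Basis p d n h f a b) (P : M3Params p d n h f) {u v s t : ℕ}
    {x y : G} (hx : x = b ^ (p ^ (n - f) * s) * a ^ t) (hy : y = b ^ u * a ^ v) :
    (x ^ p ^ h = 1 ∧ y ^ p ^ n = x ^ p ^ d ∧ x * y = y * x ^ (1 + p ^ f)) ↔
      (p : ℤ) ^ h ∣ u * p ^ d + v * p ^ n - (s * p ^ (d + (d - f)) + t * p ^ d) ∧
      (p : ℤ) ^ h ∣ t * ((1 + p ^ f) ^ u - (1 + p ^ f)) - (s * p ^ d + v * s * p ^ n) := by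
  subst hx hy
  have hfd := P.f_lt_d
  have hdh := P.d_lt_h
  have h1 : (b ^ (p ^ (n - f) * s) * a ^ t) ^ p ^ h = 1 := by
    rw [H.x_pow P s t h (by omega), ← pow_zero a, H.pow_eq_pow_iff P.prime.ne_zero]
    push_cast
    rw [sub_zero]
    exact dvd_add ((pow_dvd_pow _ (by omega)).mul_left _) (dvd_mul_left _ _)
  rw [H.x_mul_y_iff P, H.x_pow P s t d hfd.le, H.y_pow P, H.pow_eq_pow_iff P.prime.ne_zero]
  push_cast
  simp only [h1, true_and]

theorem autCond_of_mulEquiv (H : IsM3Basis p d n h f a b) (P : M3Params p d n h f) (φ : G ≃* G) :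
    ∃ u v s t : ℕ, u < p ^ n ∧ v < p ^ h ∧ s < p ^ f ∧ t < p ^ h ∧
      φ a = b ^ (p ^ (n - f) * s) * a ^ t ∧ φ b = b ^ u * a ^ v ∧
      AutCond p d n h f u v s t := by
  obtain ⟨j, t, hj, ht, hx⟩ := H.exists_lt_eq P.prime.ne_zero (φ a)
  obtain ⟨u, v, hu, hv, hy⟩ := H.exists_lt_eq P.prime.ne_zero (φ b)
  have hfd := P.f_lt_d
  have hdn := P.d_lt_n
  have hdh := P.d_lt_h
  have hp0 : 0 < p := P.prime.pos
  have hr1 : φ a ^ p ^ h = 1 := by rw [← map_pow, H.a_pow, map_one]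
  have hr2 : φ b ^ p ^ n = φ a ^ p ^ d := by rw [← map_pow, H.b_pow, map_pow]
  have hr3 : φ a * φ b = φ b * φ a ^ (1 + p ^ f) := by
    rw [← map_mul, H.a_mul_b, map_mul, map_pow]
  obtain ⟨s, rfl⟩ : p ^ (n - f) ∣ j := by
    have h1 := hr3
    rw [hx, hy, mul_pow_pow_of_conj H.a_mul_b, mul_pow_mul_pow_of_conj H.a_mul_b,
      mul_pow_mul_pow_of_conj H.a_mul_b, H.eq_iff] at h1
    obtain ⟨k, hk, -⟩ := h1
    have h2 : p ^ (n - f) * p ^ f ∣ j * p ^ f := by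
      rw [← pow_add, show n - f + f = n by omega]
      zify
      exact ⟨-k, by push_cast at hk; linear_combination -hk⟩
    exact Nat.dvd_of_mul_dvd_mul_right (by positivity) h2
  refine ⟨u, v, s, t, hu, hv, ?_, ht, hx, hy, ?_, (H.relations_iff P hx hy).mp ⟨hr1, hr2, hr3⟩⟩
  · refine lt_of_mul_lt_mul_left (a := p ^ (n - f)) ?_ (Nat.zero_le _)
    rwa [← pow_add, show n - f + f = n by omega]
  · rintro ⟨c, rfl⟩
    have h1 : φ (a ^ p ^ (h - 1)) = 1 := by
      rw [map_pow, hx, H.x_pow P s _ (h - 1) (by omega), ← pow_zero a,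
        H.pow_eq_pow_iff P.prime.ne_zero]
      push_cast
      have hc : (p : ℤ) * c * p ^ (h - 1) = c * p ^ h := by
        conv_rhs => rw [← Nat.sub_add_cancel (show 1 ≤ h by omega), pow_succ]
        ring
      rw [sub_zero, hc]
      exact dvd_add ((pow_dvd_pow _ (by omega)).mul_left _) (dvd_mul_left _ _)
    rw [map_eq_one_iff φ φ.injective, ← pow_zero a, H.pow_eq_pow_iff P.prime.ne_zero] at h1
    simp only [Nat.cast_pow, CharP.cast_eq_zero, sub_zero] at h1
    norm_cast at h1
    have := (Nat.pow_dvd_pow_iff_le_right P.prime.one_lt).mp h1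
    omega

end IsM3Basis

namespace M3Params

variable {p d n h f : ℕ}

theorem pow_dvd_pow_sub_iff (P : M3Params p d n h f) (u : ℕ) :
    (p : ℤ) ^ d ∣ (1 + p ^ f) ^ u - (1 + p ^ f) ↔ (p : ℤ) ^ (d - f) ∣ u - 1 := by
  obtain ⟨hp, hodd, hf, hfd, hdh, hh, hdn⟩ := P
  have hp1 : ¬ IsUnit (p : ℤ) := (Nat.prime_iff_prime_int.mp hp).not_isUnit
  cases u with
  | zero =>
    refine iff_of_false (fun h0 => ?_) fun h0 => ?_
    · have h1 : (p : ℤ) ^ d ∣ p ^ f := by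
        rw [← dvd_neg]
        simpa using h0
      have := (pow_dvd_pow_iff (by exact_mod_cast hp.ne_zero) hp1).mp h1
      omega
    · have h1 : (p : ℤ) ∣ 1 := by
        rw [← dvd_neg]
        simpa using (dvd_pow_self (p : ℤ) (by omega : d - f ≠ 0)).trans h0
      exact hp1 (isUnit_of_dvd_one h1)
  | succ u =>
    have h1 := prime_pow_dvd_pow_sub_one_iff hp hodd hf (d - f) u
    rw [show f + (d - f) = d by omega] at h1
    have h2 : IsCoprime ((p : ℤ) ^ d) (1 + p ^ f) := by
      refine IsCoprime.pow_left ⟨-(p : ℤ) ^ (f - 1), 1, ?_⟩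
      rw [neg_mul, ← pow_succ, Nat.sub_add_cancel hf]
      ring
    have h3 : (p : ℤ) ^ (d - f) ∣ ((u + 1 : ℕ) : ℤ) - 1 ↔ p ^ (d - f) ∣ u := by
      rw [Nat.cast_succ, add_sub_cancel_right, ← Int.natCast_dvd_natCast, Nat.cast_pow]
    rw [pow_succ', ← mul_sub_one, h3, ← h1]
    exact ⟨h2.dvd_of_dvd_mul_left, fun h4 => h4.mul_left _⟩

theorem autCond_iff (P : M3Params p d n h f) (u v s t : ℕ) {w κ : ℤ}
    (hw : (1 + (p : ℤ) ^ f) ^ u - (1 + p ^ f) = p ^ d * w)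
    (hκ : (p : ℤ) ^ (h - d) ∣ κ * (1 + v * p ^ (n - d) + p ^ (d - f) * w) - 1)
    (hu : (p : ℤ) ^ (d - f) ∣ u - 1) :
    AutCond p d n h f u v s t ↔
      (p : ℤ) ^ (h - d) ∣ s - κ * (w * (u + v * p ^ (n - d))) ∧
      (p : ℤ) ^ (h - d) ∣ t - (u + v * p ^ (n - d) - s * p ^ (d - f)) := by
  obtain ⟨hp, hodd, hf, hfd, hdh, hh, hdn⟩ := P
  have hp0 : (p : ℤ) ^ d ≠ 0 := pow_ne_zero _ (by exact_mod_cast hp.ne_zero)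
  have hh' : (p : ℤ) ^ h = p ^ d * p ^ (h - d) := by rw [← pow_add]; congr 1; omega
  have hn' : (p : ℤ) ^ n = p ^ d * p ^ (n - d) := by rw [← pow_add]; congr 1; omega
  have hpM : (p : ℤ) ∣ p ^ (h - d) := dvd_pow_self _ (by omega)
  have hpN : (p : ℤ) ∣ p ^ (n - d) := dvd_pow_self _ (by omega)
  have hpD : (p : ℤ) ∣ p ^ (d - f) := dvd_pow_self _ (by omega)
  have e2 : (p : ℤ) ^ h ∣ u * p ^ d + v * p ^ n - (s * p ^ (d + (d - f)) + t * p ^ d) ↔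
      (p : ℤ) ^ (h - d) ∣ t - (u + v * p ^ (n - d) - s * p ^ (d - f)) := by
    rw [hh', hn', pow_add, ← mul_dvd_mul_iff_left (b := (p : ℤ) ^ (h - d)) hp0, ← dvd_neg]
    refine Eq.to_iff (congrArg _ ?_)
    ring
  have e3 : (p : ℤ) ^ h ∣ t * ((1 + p ^ f) ^ u - (1 + p ^ f)) - (s * p ^ d + v * s * p ^ n) ↔
      (p : ℤ) ^ (h - d) ∣ t * w - s * (1 + v * p ^ (n - d)) := by
    rw [hh', hn', hw, ← mul_dvd_mul_iff_left (b := (p : ℤ) ^ (h - d)) hp0]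
    refine Eq.to_iff (congrArg _ ?_)
    ring
  rw [AutCond, e2, e3]
  generalize (p : ℤ) ^ (h - d) = M at *
  generalize (p : ℤ) ^ (n - d) = N at *
  generalize (p : ℤ) ^ (d - f) = D at *
  obtain ⟨c, hc⟩ := hκ
  constructor
  · rintro ⟨-, ⟨x, hx⟩, ⟨y, hy⟩⟩
    refine ⟨⟨κ * (w * x - y) - c * s, ?_⟩, ⟨x, hx⟩⟩
    linear_combination κ * w * hx - κ * hy - s * hc
  · rintro ⟨⟨x, hx⟩, ⟨y, hy⟩⟩
    refine ⟨fun hpt => ?_, ⟨y, hy⟩, ?_⟩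
    · have h1 : (p : ℤ) ∣ t := by exact_mod_cast hpt
      have h2 : (1 : ℤ) = t - M * y - v * N + s * D - (u - 1) := by linear_combination -hy
      refine (Nat.prime_iff_prime_int.mp hp).not_dvd_one (h2 ▸ ?_)
      exact dvd_sub (dvd_add (dvd_sub (dvd_sub h1 (hpM.mul_right _)) (hpN.mul_left _))
        (hpD.mul_left _)) (hpD.trans hu)
    · refine ⟨w * y - (1 + v * N + D * w) * x - c * (w * (u + v * N)), ?_⟩
      linear_combination w * hy - (1 + v * N + D * w) * hx - (w * (u + v * N)) * hc

theorem u_dvd_of_autCond (P : M3Params p d n h f) {u v s t : ℕ}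
    (hC : AutCond p d n h f u v s t) : (p : ℤ) ^ (d - f) ∣ u - 1 := by
  rw [← P.pow_dvd_pow_sub_iff]
  obtain ⟨ht, -, h3⟩ := hC
  have hdh := P.d_lt_h
  have hdn := P.d_lt_n
  have ht' : IsCoprime ((p : ℤ) ^ d) t := by
    refine IsCoprime.pow_left ?_
    rw [Nat.isCoprime_iff_coprime]
    exact (Nat.Prime.coprime_iff_not_dvd P.prime).mpr ht
  refine ht'.dvd_of_dvd_mul_left ?_
  have h4 : (p : ℤ) ^ d ∣ s * p ^ d + v * s * p ^ n :=
    dvd_add (dvd_mul_left _ _) ((pow_dvd_pow _ hdn.le).mul_left _)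
  exact (dvd_sub_left h4).mp ((pow_dvd_pow _ hdh.le).trans h3)

theorem exists_autCond_iff (P : M3Params p d n h f) (u v : ℕ) :
    ∃ σ : ℤ, ∀ s t, AutCond p d n h f u v s t ↔ (p : ℤ) ^ (d - f) ∣ u - 1 ∧
      (p : ℤ) ^ (h - d) ∣ s - σ ∧
      (p : ℤ) ^ (h - d) ∣ t - (u + v * p ^ (n - d) - s * p ^ (d - f)) := by
  by_cases hu : (p : ℤ) ^ (d - f) ∣ u - 1
  · obtain ⟨w, hw⟩ := (P.pow_dvd_pow_sub_iff u).mpr hu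
    have hfd := P.f_lt_d
    have hdn := P.d_lt_n
    have hco : IsCoprime ((p : ℤ) ^ (h - d)) (1 + v * p ^ (n - d) + p ^ (d - f) * w) := by
      refine IsCoprime.pow_left ⟨-(v * p ^ (n - d - 1) + p ^ (d - f - 1) * w), 1, ?_⟩
      have e1 : (p : ℤ) ^ (n - d) = p ^ (n - d - 1) * p := by
        rw [← pow_succ, Nat.sub_add_cancel (by omega)]
      have e2 : (p : ℤ) ^ (d - f) = p ^ (d - f - 1) * p := by
        rw [← pow_succ, Nat.sub_add_cancel (by omega)]
      rw [e1, e2]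
      ring
    obtain ⟨x, κ, hκ⟩ := hco
    exact ⟨κ * (w * (u + v * p ^ (n - d))), fun s t => (P.autCond_iff u v s t (κ := κ) hw
      ⟨-x, by linear_combination hκ⟩ hu).trans (by simp only [hu, true_and])⟩
  · exact ⟨0, fun s t => iff_of_false (fun hC => hu (P.u_dvd_of_autCond hC)) fun hC => hu hC.1⟩

open Classical in
/-- The number of solutions of the congruences `AutCond` among reduced exponents. -/
theorem card_autCond (P : M3Params p d n h f) :
    (((Finset.range (p ^ n)).sigma fun _ => (Finset.range (p ^ h)).sigma fun _ =>
        (Finset.range (p ^ f)).sigma fun _ => Finset.range (p ^ h)).filter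
      fun q => AutCond p d n h f q.1 q.2.1 q.2.2.1 q.2.2.2).card = p ^ (n + 2 * f + d) := by
  choose σ hσ using P.exists_autCond_iff
  obtain ⟨hp, hodd, hf, hfd, hdh, hh, hdn⟩ := P
  have hset : ((Finset.range (p ^ n)).sigma fun _ => (Finset.range (p ^ h)).sigma fun _ =>
        (Finset.range (p ^ f)).sigma fun _ => Finset.range (p ^ h)).filter
      (fun q => AutCond p d n h f q.1 q.2.1 q.2.2.1 q.2.2.2) =
      ((Finset.range (p ^ n)).filter fun u : ℕ => ((p ^ (d - f) : ℕ) : ℤ) ∣ u - 1).sigma fun u =>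
        (Finset.range (p ^ h)).sigma fun v =>
          ((Finset.range (p ^ f)).filter fun s : ℕ => ((p ^ (h - d) : ℕ) : ℤ) ∣ s - σ u v).sigma
            fun s => (Finset.range (p ^ h)).filter fun t : ℕ => ((p ^ (h - d) : ℕ) : ℤ) ∣
              t - (u + v * p ^ (n - d) - s * p ^ (d - f)) := by
    ext ⟨u, v, s, t⟩
    simp only [Finset.mem_filter, Finset.mem_sigma, hσ, Nat.cast_pow]
    tauto
  have hc : ∀ {k m : ℕ}, k ≤ m → ∀ c : ℤ,
      ((Finset.range (p ^ m)).filter fun x : ℕ => ((p ^ k : ℕ) : ℤ) ∣ x - c).card =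
        p ^ (m - k) := fun hk c => by
    rw [card_filter_range_dvd_sub (pow_pos hp.pos _) (pow_dvd_pow p hk),
      Nat.pow_div hk hp.pos]
  rw [hset]
  simp only [Finset.card_sigma, hc (show h - d ≤ h by omega), Finset.sum_const, smul_eq_mul,
    hc (show h - d ≤ f by omega), hc (show d - f ≤ n by omega), Finset.card_range, ← pow_add]
  congr 1
  omega

end M3Params

namespace IsM3Basis

variable {G : Type*} [Group G] {a b : G} {p d n h f : ℕ}

theorem mem_of_pow_a_mem (H : IsM3Basis p d n h f a b) {K : Subgroup G} {c : ℤ}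
    (hc : IsCoprime ((p : ℤ) ^ h) c) (hK : a ^ c ∈ K) : a ∈ K := by
  obtain ⟨x, y, hxy⟩ := hc
  have h1 : a = (a ^ c) ^ y := by
    conv_lhs => rw [← zpow_one a, ← hxy, zpow_add, H.zpow_eq_one (dvd_mul_left _ _), one_mul,
      mul_comm, zpow_mul]
  rw [h1]
  exact K.zpow_mem hK y

theorem b_pow_eq_one (H : IsM3Basis p d n h f a b) : b ^ p ^ (n + h) = 1 := by
  rw [pow_add, pow_mul, H.b_pow, ← pow_mul, mul_comm, pow_mul, H.a_pow, one_pow]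

theorem eq_top_of_mem (H : IsM3Basis p d n h f a b) (hp : p.Prime) (hf : 0 < f)
    {K : Subgroup G} {j t u v : ℕ} (hj : p ∣ j) (ht : ¬ p ∣ t) (hu : ¬ p ∣ u)
    (hx : b ^ j * a ^ t ∈ K) (hy : b ^ u * a ^ v ∈ K) : K = ⊤ := by
  have hp' := Nat.prime_iff_prime_int.mp hp
  have hcop : Nat.Coprime u (orderOf b) :=
    ((Nat.Coprime.pow_left (n + h) ((Nat.Prime.coprime_iff_not_dvd hp).mpr hu)).symm).of_dvd_right
      (orderOf_dvd_of_pow_eq_one H.b_pow_eq_one)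
  obtain ⟨m, hm⟩ := exists_pow_eq_self_of_coprime hcop
  have hk : b ^ (u * (m * j)) = b ^ j := by rw [← mul_assoc, pow_mul, pow_mul, hm]
  have hkp : p ∣ m * j := hj.mul_left m
  have hb := K.mul_mem (K.inv_mem (K.pow_mem hy (m * j))) hx
  rw [mul_pow_pow_of_conj H.a_mul_b, hk, mul_inv_rev, mul_assoc, inv_mul_cancel_left,
    ← zpow_natCast, ← zpow_natCast, ← zpow_neg, ← zpow_add] at hb
  have ha : a ∈ K := by
    refine H.mem_of_pow_a_mem (IsCoprime.pow_left ((hp'.coprime_iff_not_dvd).mpr ?_)) hb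
    have hr : (p : ℤ) ∣ ((1 + p ^ f) ^ u : ℤ) - 1 := by
      have := sub_one_dvd_pow_sub_one (1 + (p : ℤ) ^ f) u
      rw [add_sub_cancel_left] at this
      exact (dvd_pow_self _ hf.ne').trans this
    have hS := dvd_geomSum_sub hr (m * j)
    have hS' : (p : ℤ) ∣ ∑ l ∈ Finset.range (m * j), ((1 + (p : ℤ) ^ f) ^ u) ^ l :=
      (dvd_sub_left (by exact_mod_cast hkp)).mp hS
    push_cast
    rw [dvd_add_right ((hS'.mul_left _).neg_right)]
    exact_mod_cast ht
  have hbu : b ^ u ∈ K := by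
    have := K.mul_mem hy (K.inv_mem (K.pow_mem ha v))
    rwa [mul_inv_cancel_right] at this
  have hbK : b ∈ K := hm ▸ K.pow_mem hbu m
  rw [eq_top_iff]
  intro g _
  obtain ⟨j, i, rfl⟩ := H.exists_eq g
  exact K.mul_mem (K.pow_mem hbK _) (K.pow_mem ha _)

theorem finite (H : IsM3Basis p d n h f a b) (hp : p ≠ 0) : Finite G := by
  refine Finite.of_surjective
    (fun q : Fin (p ^ n) × Fin (p ^ h) => b ^ (q.1 : ℕ) * a ^ (q.2 : ℕ)) fun g => ?_
  obtain ⟨j, i, hj, hi, rfl⟩ := H.exists_lt_eq hp g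
  exact ⟨(⟨j, hj⟩, ⟨i, hi⟩), rfl⟩

theorem exists_mulEquiv (H : IsM3Basis p d n h f a b) (P : M3Params p d n h f)
    (hlift : ∀ x y : G, x ^ p ^ h = 1 → y ^ p ^ n = x ^ p ^ d → x * y = y * x ^ (1 + p ^ f) →
      ∃ φ : G →* G, φ a = x ∧ φ b = y)
    {u v s t : ℕ} (hC : AutCond p d n h f u v s t) :
    ∃ φ : G ≃* G, φ a = b ^ (p ^ (n - f) * s) * a ^ t ∧ φ b = b ^ u * a ^ v := by
  have hfd := P.f_lt_d
  have hdn := P.d_lt_n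
  obtain ⟨h1, h2, h3⟩ := (H.relations_iff P rfl rfl).mpr hC.2
  obtain ⟨φ, hx, hy⟩ := hlift _ _ h1 h2 h3
  have hu : ¬ p ∣ u := fun hu => by
    have h4 := (dvd_pow_self (p : ℤ) (by omega : d - f ≠ 0)).trans (P.u_dvd_of_autCond hC)
    rw [dvd_sub_right (by exact_mod_cast hu)] at h4
    exact (Nat.prime_iff_prime_int.mp P.prime).not_dvd_one h4
  have hr : φ.range = ⊤ := H.eq_top_of_mem P.prime P.f_pos
    ((dvd_pow_self p (by omega : n - f ≠ 0)).mul_right s) hC.1 hu ⟨a, hx⟩ ⟨b, hy⟩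
  have hsurj : Function.Surjective φ := MonoidHom.range_eq_top.mp hr
  have := H.finite P.prime.ne_zero
  exact ⟨MulEquiv.ofBijective φ ⟨Finite.injective_iff_surjective.mpr hsurj, hsurj⟩, hx, hy⟩

theorem mulEquiv_ext (H : IsM3Basis p d n h f a b) {φ ψ : G ≃* G} (ha : φ a = ψ a)
    (hb : φ b = ψ b) : φ = ψ := by
  ext g
  obtain ⟨j, i, rfl⟩ := H.exists_eq g
  simp only [map_mul, map_pow, ha, hb]

theorem card_mulAut (H : IsM3Basis p d n h f a b) (P : M3Params p d n h f)
    (hlift : ∀ x y : G, x ^ p ^ h = 1 → y ^ p ^ n = x ^ p ^ d → x * y = y * x ^ (1 + p ^ f) →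
      ∃ φ : G →* G, φ a = x ∧ φ b = y) :
    Nat.card (MulAut G) = p ^ (n + 2 * f + d) := by
  classical
  have hfd := P.f_lt_d
  have hdn := P.d_lt_n
  have hp0 := P.prime.pos
  rw [← P.card_autCond, ← Fintype.card_coe, ← Nat.card_eq_fintype_card]
  choose U V S T hU hV hS hT hA hB hC using H.autCond_of_mulEquiv P
  refine Nat.card_eq_of_bijective (fun φ : MulAut G => ⟨⟨U φ, V φ, S φ, T φ⟩, ?_⟩)
    ⟨fun φ ψ hφψ => ?_, ?_⟩
  · simp only [Finset.mem_filter, Finset.mem_sigma, Finset.mem_range]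
    exact ⟨⟨hU φ, hV φ, hS φ, hT φ⟩, hC φ⟩
  · simp only [Subtype.mk.injEq, Sigma.mk.injEq, heq_eq_eq] at hφψ
    obtain ⟨h1, h2, h3, h4⟩ := hφψ
    apply H.mulEquiv_ext
    · rw [hA, hA, h3, h4]
    · rw [hB, hB, h1, h2]
  · rintro ⟨⟨u, v, s, t⟩, hq⟩
    simp only [Finset.mem_filter, Finset.mem_sigma, Finset.mem_range] at hq
    obtain ⟨⟨hu, hv, hs, ht⟩, hC'⟩ := hq
    obtain ⟨φ, hφa, hφb⟩ := H.exists_mulEquiv P hlift hC'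
    have hlt : ∀ {s : ℕ}, s < p ^ f → p ^ (n - f) * s < p ^ n := fun {s} hs => by
      calc p ^ (n - f) * s < p ^ (n - f) * p ^ f := by gcongr
        _ = p ^ n := by rw [← pow_add, Nat.sub_add_cancel (by omega)]
    obtain ⟨h1, h2⟩ := H.eq_and_eq_of_lt (hlt hs) (hlt (hS φ)) ht (hT φ) (hφa.symm.trans (hA φ))
    obtain ⟨h3, h4⟩ := H.eq_and_eq_of_lt hu (hU φ) hv (hV φ) (hφb.symm.trans (hB φ))
    have h5 : s = S φ := Nat.eq_of_mul_eq_mul_left (by positivity) h1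
    exact ⟨φ, by simp only [← h2, ← h3, ← h4, ← h5]⟩

end IsM3Basis

section Presentation

variable {p d e h f : ℕ}

theorem M3a_pow : M3a p d e h f ^ p ^ h = 1 := by
  have := PresentedGroup.one_of_mem (rels := M3rels p d e h f) (x := FreeGroup.of 0 ^ p ^ h)
    (by simp [M3rels])
  rwa [map_pow] at this

theorem M3b_pow : M3b p d e h f ^ p ^ (d + e - h) = M3a p d e h f ^ p ^ d := by
  have := PresentedGroup.one_of_mem (rels := M3rels p d e h f)
    (x := FreeGroup.of 1 ^ p ^ (d + e - h) * (FreeGroup.of 0 ^ p ^ d)⁻¹) (by simp [M3rels])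
  rwa [map_mul, map_inv, mul_inv_eq_one, map_pow, map_pow] at this

theorem M3a_mul_M3b :
    M3a p d e h f * M3b p d e h f = M3b p d e h f * M3a p d e h f ^ (1 + p ^ f) := by
  have := PresentedGroup.one_of_mem (rels := M3rels p d e h f)
    (x := (FreeGroup.of 1)⁻¹ * FreeGroup.of 0 * FreeGroup.of 1 *
      (FreeGroup.of 0 ^ (1 + p ^ f))⁻¹) (by simp [M3rels])
  rwa [map_mul, map_inv, mul_inv_eq_one, map_mul, map_mul, map_inv, mul_assoc,
    inv_mul_eq_iff_eq_mul, map_pow] at this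

theorem M3_exists_hom {G : Type*} [Group G] {x y : G} (hx : x ^ p ^ h = 1)
    (hy : y ^ p ^ (d + e - h) = x ^ p ^ d) (hxy : x * y = y * x ^ (1 + p ^ f)) :
    ∃ φ : M3 p d e h f →* G, φ (M3a p d e h f) = x ∧ φ (M3b p d e h f) = y := by
  have hr : ∀ r ∈ M3rels p d e h f, FreeGroup.lift ![x, y] r = 1 := by
    rintro r (rfl | rfl | rfl)
    · simpa using hx
    · simp [hy]
    · simp [mul_assoc, ← mul_assoc x, hxy]
  exact ⟨PresentedGroup.toGroup hr, by simp [M3a], by simp [M3b]⟩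

theorem M3_exists_eq (hp : 0 < p) (g : M3 p d e h f) :
    ∃ j i : ℕ, g = M3b p d e h f ^ j * M3a p d e h f ^ i := by
  have hmul : ∀ j i j' i' : ℕ, ∃ k l : ℕ, M3b p d e h f ^ j * M3a p d e h f ^ i *
      (M3b p d e h f ^ j' * M3a p d e h f ^ i') = M3b p d e h f ^ k * M3a p d e h f ^ l :=
    fun j i j' i' => ⟨_, _, mul_pow_mul_pow_of_conj M3a_mul_M3b j i j' i'⟩
  have inv_eq : ∀ {x : M3 p d e h f} {N : ℕ}, 0 < N → x ^ N = 1 → ∀ k : ℕ,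
      (x ^ k)⁻¹ = x ^ (k * (N - 1)) := fun {x N} hN hx k => by
    obtain ⟨N, rfl⟩ := Nat.exists_eq_add_one_of_ne_zero hN.ne'
    rw [inv_eq_iff_mul_eq_one, ← pow_add, Nat.add_sub_cancel, add_comm, ← mul_add_one, mul_comm,
      pow_mul, hx, one_pow]
  let K : Subgroup (M3 p d e h f) :=
    { carrier := {g | ∃ j i : ℕ, g = M3b p d e h f ^ j * M3a p d e h f ^ i}
      mul_mem' := by
        rintro _ _ ⟨j, i, rfl⟩ ⟨j', i', rfl⟩
        exact hmul j i j' i'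
      one_mem' := ⟨0, 0, by simp⟩
      inv_mem' := by
        rintro _ ⟨j, i, rfl⟩
        have hb : M3b p d e h f ^ p ^ (d + e - h + h) = 1 := by
          rw [pow_add, pow_mul, M3b_pow, ← pow_mul, mul_comm, pow_mul, M3a_pow, one_pow]
        obtain ⟨k, l, hkl⟩ := hmul 0 (i * (p ^ h - 1)) (j * (p ^ (d + e - h + h) - 1)) 0
        refine ⟨k, l, ?_⟩
        rw [mul_inv_rev, inv_eq (pow_pos hp _) M3a_pow, inv_eq (pow_pos hp _) hb, ← hkl]
        simp }
  refine PresentedGroup.generated_by (M3rels p d e h f) K (fun j => ?_) g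
  fin_cases j
  · exact ⟨0, 1, by simp [M3a]⟩
  · exact ⟨1, 0, by simp [M3b]⟩

open Multiplicative SemidirectProduct in
theorem M3_exists_of_eq_one (P : M3Params p d (d + e - h) h f) {i j : ℤ}
    (hij : M3b p d e h f ^ j * M3a p d e h f ^ i = 1) :
    ∃ k : ℤ, j = k * p ^ (d + e - h) ∧ (p : ℤ) ^ h ∣ i + k * p ^ d := by
  obtain ⟨hp, hodd, hf, hfd, hdh, hh, hdn⟩ := P
  have hcop : Nat.Coprime (1 + p ^ f) (p ^ h) := by
    refine Nat.Coprime.pow_right _ (((Nat.Prime.coprime_iff_not_dvd hp).mpr fun h1 => ?_).symm)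
    exact hp.one_lt.ne' (Nat.dvd_one.mp ((Nat.dvd_add_left (dvd_pow_self p hf.ne')).mp h1))
  let r : (ZMod (p ^ h))ˣ := ZMod.unitOfCoprime (1 + p ^ f) hcop
  have hr : (r : ZMod (p ^ h)) = 1 + p ^ f := by simp [r]
  have hpow : r⁻¹ ^ ((p : ℤ) ^ (d + e - h)) = 1 := by
    have h1 := (prime_pow_dvd_pow_sub_one_iff hp hodd hf (d + e - h) (p ^ (d + e - h))).mpr dvd_rfl
    have h2 := (pow_dvd_pow (p : ℤ) (by omega : h ≤ f + (d + e - h))).trans h1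
    rw [← Nat.cast_pow p h, ← ZMod.intCast_zmod_eq_zero_iff_dvd] at h2
    push_cast at h2
    rw [inv_zpow, inv_eq_one, ← Nat.cast_pow, zpow_natCast]
    apply Units.ext
    rw [Units.val_pow_eq_pow_val, hr, Units.val_one]
    exact sub_eq_zero.mp h2
  have hcen : (((r⁻¹ : (ZMod (p ^ h))ˣ) : ZMod (p ^ h)) - 1) * ((p ^ d : ℤ) : ZMod (p ^ h)) = 0 := by
    have h1 : (p : ZMod (p ^ h)) ^ (d + f) = 0 := by
      rw [← Nat.cast_pow, ZMod.natCast_eq_zero_iff]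
      exact pow_dvd_pow p hh
    have h2 : ((r⁻¹ : (ZMod (p ^ h))ˣ) : ZMod (p ^ h)) * r = 1 := r.inv_mul
    rw [hr] at h2
    rw [pow_add] at h1
    push_cast
    linear_combination (p : ZMod (p ^ h)) ^ d * h2 - ((r⁻¹ : (ZMod (p ^ h))ˣ) : ZMod (p ^ h)) * h1
  let Z := Subgroup.zpowers (centralElt r⁻¹ ((p : ℤ) ^ (d + e - h)) (p ^ d))
  have hZ : Z.Normal := by
    refine ⟨fun z hz g => ?_⟩
    obtain ⟨k, rfl⟩ := Subgroup.mem_zpowers_iff.mp hz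
    have hc : Commute g (centralElt r⁻¹ ((p : ℤ) ^ (d + e - h)) (p ^ d)) :=
      (centralElt_comm hpow hcen g).symm
    rwa [(hc.zpow_right k).eq, mul_inv_cancel_right]
  let A : Multiplicative (ZMod (p ^ h)) ⋊[unitAction r⁻¹] Multiplicative ℤ :=
    inl (ofAdd 1)
  let B : Multiplicative (ZMod (p ^ h)) ⋊[unitAction r⁻¹] Multiplicative ℤ :=
    inr (ofAdd 1)
  have hA : ∀ i : ℤ, A ^ i = inl (ofAdd (i : ZMod (p ^ h))) := fun i => by
    rw [← map_zpow, ← ofAdd_zsmul, zsmul_one]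
  have hB : ∀ j : ℤ, B ^ j = inr (ofAdd j) := fun j => by
    rw [← map_zpow, ← ofAdd_zsmul, smul_eq_mul, mul_one]
  have h1 : (A : _ ⧸ Z) ^ p ^ h = 1 := by
    have : A ^ p ^ h = 1 := by
      rw [← zpow_natCast, hA, Int.cast_natCast, ZMod.natCast_self, ofAdd_zero, map_one]
    rw [← QuotientGroup.mk_pow, this, QuotientGroup.mk_one]
  have h2 : (B : _ ⧸ Z) ^ p ^ (d + e - h) = (A : _ ⧸ Z) ^ p ^ d := by
    rw [← QuotientGroup.mk_pow, ← QuotientGroup.mk_pow, eq_comm, QuotientGroup.eq]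
    refine Subgroup.mem_zpowers_iff.mpr ⟨1, ?_⟩
    rw [zpow_one, ← zpow_natCast A, ← zpow_natCast B, hA, hB, centralElt, ofAdd_neg, map_inv]
    simp
  have h3 : (A : _ ⧸ Z) * B = B * (A : _ ⧸ Z) ^ (1 + p ^ f) := by
    have : A * B = B * A ^ (1 + p ^ f) := by
      rw [← zpow_natCast, hA]
      apply SemidirectProduct.ext
      · apply toAdd.injective
        have h4 : ((r⁻¹ : (ZMod (p ^ h))ˣ) : ZMod (p ^ h)) * (1 + p ^ f) = 1 := by
          rw [← hr, Units.inv_mul]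
        simpa [A, B, unitAction_apply] using h4.symm
      · simp [A, B]
    rw [← QuotientGroup.mk_mul, this, QuotientGroup.mk_mul, QuotientGroup.mk_pow]
  obtain ⟨φ, ha, hb⟩ := M3_exists_hom h1 h2 h3
  have h4 := congrArg φ hij
  rw [map_mul, map_zpow, map_zpow, ha, hb, map_one, ← QuotientGroup.mk_zpow,
    ← QuotientGroup.mk_zpow, ← QuotientGroup.mk_mul, QuotientGroup.eq_one_iff, hA, hB] at h4
  simpa using inr_mul_inl_mem_zpowers_centralElt hpow h4

theorem isM3Basis (P : M3Params p d (d + e - h) h f) :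
    IsM3Basis p d (d + e - h) h f (M3a p d e h f) (M3b p d e h f) :=
  ⟨M3a_pow, M3b_pow, M3a_mul_M3b, fun _ _ => M3_exists_of_eq_one P, M3_exists_eq P.prime.pos⟩

end Presentation

/-- For `h - d ≤ f < d < h < e`, the order of `Aut(M₃(p,d,e,h,f))` equals
`p^(2d+e+2f-h)`. -/
theorem stmt_16 (p d e h f : ℕ) (hp : p.Prime) (hodd : Odd p)
    (hf : 0 < f) (hhd : h - d ≤ f) (hfd : f < d) (hdh : d < h) (hhe : h < e) :
    Nat.card (MulAut (M3 p d e h f)) = p ^ (2 * d + e + 2 * f - h) := by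
  have P : M3Params p d (d + e - h) h f :=
    ⟨hp, hodd, hf, hfd, hdh, by omega, by omega⟩
  rw [(isM3Basis P).card_mulAut P fun x y hx hy hxy => M3_exists_hom hx hy hxy]
  congr 1
  omega
end

section
/- Let p be an odd prime and let d, e, f be positive integers with d < e, f ≤ e and e ≤ d + f, and let G = M₁(p,d,e,f). Consider the action of the automorphism group Aut(G) on the set of exact (p^d, p^e)-bicyclic pairs of G given by φ·(α, β) = (φ(α), φ(β)). Then the number of orbits of this action equals: 1 if d < f = e; p^{e−f−1}(p−1) if d ≤ f < e ≤ d+f; and p^{d+e−2f−1}(p−1) if f < d < e ≤ d+f. -/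
/-- The equivalence on exact `(m,n)`-bicyclic pairs of `G` induced by the componentwise
action of `Aut(G)`: two pairs are equivalent iff some automorphism maps one to the other.
The orbits of the action are exactly the equivalence classes. -/
def bicyclicPairSetoid (G : Type*) [Group G] (m n : ℕ) :
    Setoid {x : G × G // IsExactBicyclicPair m n x.1 x.2} where
  r x y := ∃ φ : MulAut G, φ x.1.1 = y.1.1 ∧ φ x.1.2 = y.1.2
  iseqv := by
    refine ⟨fun x => ⟨MulEquiv.refl G, rfl, rfl⟩, ?_, ?_⟩
    · rintro x y ⟨φ, h1, h2⟩
      exact ⟨φ.symm, by rw [← h1]; exact φ.symm_apply_apply _,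
        by rw [← h2]; exact φ.symm_apply_apply _⟩
    · rintro x y z ⟨φ, h1, h2⟩ ⟨ψ, h3, h4⟩
      exact ⟨φ.trans ψ, by simp [MulEquiv.trans_apply, h1, h3],
        by simp [MulEquiv.trans_apply, h2, h4]⟩

section Arithmetic

lemma geom_sum_range_mul {R : Type*} [CommRing R] (x : R) (m n : ℕ) :
    ∑ i ∈ Finset.range (m * n), x ^ i =
      (∑ i ∈ Finset.range m, x ^ i) * ∑ j ∈ Finset.range n, (x ^ m) ^ j := by
  induction n with
  | zero => simp
  | succ n ih =>
    rw [Nat.mul_succ, Finset.sum_range_add, ih, Finset.sum_range_succ _ n, mul_add, Finset.sum_mul,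
      ← pow_mul]
    simp only [pow_add, mul_comm, Finset.sum_mul]

/-- If `x ≡ 1` modulo an odd `p`, then `1 + x + ⋯ + x ^ (p ^ k - 1)` is `p ^ k` times an element
congruent to `1` modulo `p`. -/
lemma exists_geom_sum_prime_pow_eq {R : Type*} [CommRing R] {p : ℕ} (hodd : Odd p) {x : R}
    (hx : (p : R) ∣ x - 1) (k : ℕ) :
    ∃ z : R, ∑ i ∈ Finset.range (p ^ k), x ^ i = (p : R) ^ k * (1 + p * z) := by
  induction k with
  | zero => exact ⟨0, by simp⟩
  | succ k ih =>
    obtain ⟨z, hz⟩ := ih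
    have hy : (p : R) ∣ x ^ p ^ k - 1 := hx.trans (sub_one_dvd_pow_sub_one x _)
    obtain ⟨w, hw⟩ := hy
    obtain ⟨v, hv⟩ := odd_sq_dvd_geom_sum₂_sub (1 : R) w hodd
    rw [← hw] at hv
    simp only [add_sub_cancel, one_pow, mul_one] at hv
    refine ⟨z + v + p * z * v, ?_⟩
    rw [pow_succ, geom_sum_range_mul, hz, sub_eq_iff_eq_add.mp hv]
    ring

variable {p : ℕ}

lemma isUnit_one_add_prime_mul (n : ℕ) (z : ZMod (p ^ n)) : IsUnit (1 + (p : ZMod (p ^ n)) * z) := by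
  refine IsNilpotent.isUnit_one_add ⟨n, ?_⟩
  rw [mul_pow, ← Nat.cast_pow, ZMod.natCast_self, zero_mul]

lemma natCast_prime_pow_eq_zero {n k : ℕ} (h : n ≤ k) : (p : ZMod (p ^ n)) ^ k = 0 := by
  rw [← Nat.cast_pow, ZMod.natCast_eq_zero_iff]
  exact pow_dvd_pow p h

lemma prime_dvd_of_not_isUnit (hp : p.Prime) {n : ℕ} {x : ZMod (p ^ n)} (hx : ¬ IsUnit x) :
    (p : ZMod (p ^ n)) ∣ x := by
  have : NeZero (p ^ n) := ⟨(pow_pos hp.pos n).ne'⟩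
  rw [← ZMod.natCast_zmod_val x] at hx ⊢
  rw [ZMod.isUnit_iff_coprime] at hx
  apply Nat.cast_dvd_cast
  by_contra h
  exact hx (Nat.Coprime.pow_right n ((hp.coprime_iff_not_dvd.mpr h).symm))

lemma isUnit_of_prime_pow_mul_ne_zero (hp : p.Prime) {n k : ℕ} (hk : n ≤ k + 1)
    {x : ZMod (p ^ n)} (hx : (p : ZMod (p ^ n)) ^ k * x ≠ 0) : IsUnit x := by
  by_contra h
  obtain ⟨y, rfl⟩ := prime_dvd_of_not_isUnit hp h
  apply hx
  rw [← mul_assoc, ← pow_succ, natCast_prime_pow_eq_zero hk, zero_mul]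

lemma prime_pow_ne_zero (hp : p.Prime) {n k : ℕ} (hk : k < n) :
    (p : ZMod (p ^ n)) ^ k ≠ 0 := by
  rw [← Nat.cast_pow, Ne, ZMod.natCast_eq_zero_iff, Nat.pow_dvd_pow_iff_le_right hp.one_lt]
  omega

lemma prime_dvd_of_prime_pow_mul_eq_zero (hp : p.Prime) {n k : ℕ} (hk : k < n)
    {x : ZMod (p ^ n)} (hx : (p : ZMod (p ^ n)) ^ k * x = 0) : (p : ZMod (p ^ n)) ∣ x := by
  refine prime_dvd_of_not_isUnit hp fun h => prime_pow_ne_zero hp hk ?_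
  exact (h.mul_left_eq_zero).mp hx

lemma card_prime_pow_torsion (hp : p.Prime) {n k : ℕ} (hk : k ≤ n) :
    Nat.card {x : ZMod (p ^ n) // (p : ZMod (p ^ n)) ^ k * x = 0} = p ^ k := by
  have : NeZero (p ^ n) := ⟨(pow_pos hp.pos n).ne'⟩
  have h := IsAddCyclic.card_nsmulAddMonoidHom_ker (G := ZMod (p ^ n)) (p ^ k)
  rw [Nat.card_zmod, Nat.gcd_eq_right (pow_dvd_pow p hk)] at h
  rw [← h]
  exact Nat.card_congr (Equiv.subtypeEquivRight fun x => by
    simp [AddMonoidHom.mem_ker])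

lemma card_units_prime_pow (hp : p.Prime) {n : ℕ} (hn : 0 < n) :
    Nat.card {x : ZMod (p ^ n) // IsUnit x} = p ^ (n - 1) * (p - 1) := by
  have : NeZero (p ^ n) := ⟨(pow_pos hp.pos n).ne'⟩
  have h : Nat.card (ZMod (p ^ n))ˣ = Nat.card {x : ZMod (p ^ n) // IsUnit x} :=
    Nat.card_congr (Equiv.ofInjective _ Units.val_injective)
  rw [← h, Nat.card_eq_fintype_card, ZMod.card_units_eq_totient, Nat.totient_prime_pow hp hn]

end Arithmetic

section BicyclicPairs

variable {G H : Type*} [Group G] [Group H] {m n : ℕ}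

lemma IsExactBicyclicPair.map {α β : G} (h : IsExactBicyclicPair m n α β) (ψ : G ≃* H) :
    IsExactBicyclicPair m n (ψ α) (ψ β) := by
  obtain ⟨h1, h2, h3, h4⟩ := h
  refine ⟨by rw [MulEquiv.orderOf_eq, h1], by rw [MulEquiv.orderOf_eq, h2], ?_, fun g => ?_⟩
  · have := Subgroup.map_inf (Subgroup.zpowers α) (Subgroup.zpowers β) ψ.toMonoidHom ψ.injective
    rw [h3, Subgroup.map_bot, MonoidHom.map_zpowers, MonoidHom.map_zpowers] at this
    exact this.symm
  · obtain ⟨i, j, hij⟩ := h4 (ψ.symm g)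
    exact ⟨i, j, by rw [← map_zpow, ← map_zpow, ← map_mul, ← hij, MulEquiv.apply_symm_apply]⟩

lemma IsExactBicyclicPair.hom_ext {α β : G} (h : IsExactBicyclicPair m n α β) {φ ψ : G →* H}
    (hα : φ α = ψ α) (hβ : φ β = ψ β) : φ = ψ := by
  ext g
  obtain ⟨i, j, rfl⟩ := h.2.2.2 g
  simp [hα, hβ]

/-- An isomorphism of groups induces a bijection between their exact bicyclic pairs. -/
def bicyclicPairEquiv (m n : ℕ) (ψ : G ≃* H) :
    {x : G × G // IsExactBicyclicPair m n x.1 x.2} ≃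
      {x : H × H // IsExactBicyclicPair m n x.1 x.2} where
  toFun x := ⟨(ψ x.1.1, ψ x.1.2), x.2.map ψ⟩
  invFun x := ⟨(ψ.symm x.1.1, ψ.symm x.1.2), x.2.map ψ.symm⟩
  left_inv x := by simp
  right_inv x := by simp

lemma card_bicyclicPair_quotient_congr (m n : ℕ) (ψ : G ≃* H) :
    Nat.card (Quotient (bicyclicPairSetoid G m n)) =
      Nat.card (Quotient (bicyclicPairSetoid H m n)) := by
  refine Nat.card_congr (Quotient.congr (bicyclicPairEquiv m n ψ) fun x y => ?_)
  constructor
  · rintro ⟨φ, h1, h2⟩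
    exact ⟨(ψ.symm.trans φ).trans ψ, by simp [bicyclicPairEquiv, h1],
      by simp [bicyclicPairEquiv, h2]⟩
  · rintro ⟨φ, h1, h2⟩
    simp only [bicyclicPairEquiv, Equiv.coe_fn_mk] at h1 h2
    exact ⟨(ψ.trans φ).trans ψ.symm, by simp [h1], by simp [h2]⟩

/-- The automorphism group acts freely on exact bicyclic pairs. -/
lemma card_bicyclicPair_eq_mul (G : Type*) [Group G] (m n : ℕ) :
    Nat.card {x : G × G // IsExactBicyclicPair m n x.1 x.2} =
      Nat.card (Quotient (bicyclicPairSetoid G m n)) * Nat.card (MulAut G) := by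
  rw [← Nat.card_prod]
  symm
  refine Nat.card_congr (Equiv.ofBijective
    (fun q : Quotient (bicyclicPairSetoid G m n) × MulAut G =>
      bicyclicPairEquiv m n q.2 q.1.out) ⟨?_, ?_⟩)
  · rintro ⟨q, φ⟩ ⟨r, ψ⟩ h
    simp only at h
    have hq : ∀ (q : Quotient (bicyclicPairSetoid G m n)) (φ : MulAut G),
        Quotient.mk (bicyclicPairSetoid G m n) (bicyclicPairEquiv m n φ q.out) = q := fun q φ => by
      refine Eq.trans (Quotient.sound ?_) (Quotient.out_eq q)
      exact ⟨φ.symm, by simp [bicyclicPairEquiv], by simp [bicyclicPairEquiv]⟩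
    have hqr : q = r := by rw [← hq q φ, h, hq]
    subst hqr
    simp only [bicyclicPairEquiv, Equiv.coe_fn_mk, Subtype.mk.injEq, Prod.mk.injEq] at h
    have := q.out.2.hom_ext (φ := φ.toMonoidHom) (ψ := ψ.toMonoidHom) h.1 h.2
    rw [Prod.mk.injEq]
    exact ⟨rfl, MulEquiv.ext fun g => DFunLike.congr_fun this g⟩
  · intro x
    obtain ⟨φ, h1, h2⟩ := Quotient.exact (s := bicyclicPairSetoid G m n)
      (Quotient.out_eq (s := bicyclicPairSetoid G m n) ⟦x⟧)
    exact ⟨(⟦x⟧, φ), Subtype.ext (Prod.ext h1 h2)⟩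

/-- If `G` is presented on generators `a`, `b` by `a ^ n = b ^ m = 1` and `a * b = b * a ^ c`, and
`(b, a)` is an exact bicyclic pair, then automorphisms of `G` correspond to the exact bicyclic pairs
satisfying the last relation. -/
lemma card_mulAut_eq_card_bicyclicPair [Finite G] {a b : G} (c : ℕ)
    (hba : IsExactBicyclicPair m n b a) (hab : a * b = b * a ^ c)
    (lift : ∀ A B : G, A ^ n = 1 → B ^ m = 1 → A * B = B * A ^ c →
      ∃ φ : G →* G, φ a = A ∧ φ b = B) :
    Nat.card (MulAut G) =
      Nat.card {x : G × G // IsExactBicyclicPair m n x.1 x.2 ∧ x.2 * x.1 = x.1 * x.2 ^ c} := by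
  refine Nat.card_congr (Equiv.ofBijective
    (fun φ : MulAut G => ⟨(φ b, φ a), hba.map φ, by
      simp only [← map_mul, ← map_pow, hab]⟩) ⟨fun φ ψ h => ?_, ?_⟩)
  · simp only [Subtype.mk.injEq, Prod.mk.injEq] at h
    have := hba.hom_ext (φ := φ.toMonoidHom) (ψ := ψ.toMonoidHom) h.1 h.2
    exact MulEquiv.ext fun g => DFunLike.congr_fun this g
  · rintro ⟨⟨β, α⟩, h, hrel⟩
    obtain ⟨φ, rfl, rfl⟩ := lift α β (h.2.1 ▸ pow_orderOf_eq_one α) (h.1 ▸ pow_orderOf_eq_one β) hrel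
    have hsurj : Function.Surjective φ := fun g => by
      obtain ⟨i, j, rfl⟩ := h.2.2.2 g
      exact ⟨b ^ i * a ^ j, by simp⟩
    exact ⟨MulEquiv.ofBijective φ ⟨Finite.injective_iff_surjective.mpr hsurj, hsurj⟩, rfl⟩

end BicyclicPairs

section TwistedProduct

/-- The semidirect product of an abelian group `A` with the additive group of a ring `R`, where
`A` acts through multiplication by the character `χ`. The pair `(x, j)` stands for `b ^ j * a ^ x`. -/
@[ext]
structure TwistedProduct {A R : Type*} [AddCommGroup A] [CommRing R] (χ : AddChar A R) where
  /-- The exponent of the normal factor. -/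
  x : R
  /-- The exponent of the acting factor. -/
  j : A

namespace TwistedProduct

variable {A R : Type*} [AddCommGroup A] [CommRing R] {χ : AddChar A R}

instance : Mul (TwistedProduct χ) := ⟨fun g h => ⟨g.x * χ h.j + h.x, g.j + h.j⟩⟩

instance : One (TwistedProduct χ) := ⟨⟨0, 0⟩⟩

instance : Inv (TwistedProduct χ) := ⟨fun g => ⟨-(g.x * χ (-g.j)), -g.j⟩⟩

@[simp] lemma mul_x (g h : TwistedProduct χ) : (g * h).x = g.x * χ h.j + h.x := rfl

@[simp] lemma mul_j (g h : TwistedProduct χ) : (g * h).j = g.j + h.j := rfl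

@[simp] lemma one_x : (1 : TwistedProduct χ).x = 0 := rfl

@[simp] lemma one_j : (1 : TwistedProduct χ).j = 0 := rfl

@[simp] lemma inv_x (g : TwistedProduct χ) : g⁻¹.x = -(g.x * χ (-g.j)) := rfl

@[simp] lemma inv_j (g : TwistedProduct χ) : g⁻¹.j = -g.j := rfl

instance : Group (TwistedProduct χ) :=
  Group.ofLeftAxioms
    (fun g h k => by
      ext
      · simp only [mul_x, mul_j, AddChar.map_add_eq_mul]; ring
      · simp only [mul_j, add_assoc])
    (fun g => by ext <;> simp)
    (fun g => by
      ext
      · simp only [mul_x, inv_x, one_x, neg_mul, mul_assoc, ← AddChar.map_add_eq_mul]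
        simp
      · simp)

/-- The underlying pair of an element of a twisted product. -/
def equivProd (χ : AddChar A R) : TwistedProduct χ ≃ R × A where
  toFun g := (g.x, g.j)
  invFun q := ⟨q.1, q.2⟩
  left_inv _ := rfl
  right_inv _ := rfl

instance [Finite A] [Finite R] : Finite (TwistedProduct χ) := .of_equiv _ (equivProd χ).symm

lemma natCard_eq : Nat.card (TwistedProduct χ) = Nat.card R * Nat.card A := by
  rw [Nat.card_congr (equivProd χ), Nat.card_prod]

/-- The projection onto the acting factor. -/
def projHom (χ : AddChar A R) : TwistedProduct χ →* Multiplicative A where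
  toFun g := .ofAdd g.j
  map_one' := rfl
  map_mul' _ _ := rfl

lemma pow_j (g : TwistedProduct χ) (n : ℕ) : (g ^ n).j = n • g.j :=
  congrArg Multiplicative.toAdd (map_pow (projHom χ) g n)

lemma zpow_j (g : TwistedProduct χ) (n : ℤ) : (g ^ n).j = n • g.j :=
  congrArg Multiplicative.toAdd (map_zpow (projHom χ) g n)

lemma pow_x (g : TwistedProduct χ) (n : ℕ) :
    (g ^ n).x = g.x * ∑ i ∈ Finset.range n, χ g.j ^ i := by
  induction n with
  | zero => simp
  | succ n ih => rw [pow_succ, mul_x, ih, geom_sum_succ]; ring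

/-- A ring homomorphism killing the action gives a homomorphism to an additive group. -/
@[simps]
def ringHomProj {S : Type*} [CommRing S] (π : R →+* S) (hπ : ∀ j, π (χ j) = 1) :
    TwistedProduct χ →* Multiplicative S where
  toFun g := .ofAdd (π g.x)
  map_one' := by simp
  map_mul' g h := by simp [hπ, ofAdd_add]

end TwistedProduct

lemma pow_val_natCast {H : Type*} [Monoid H] {g : H} {n : ℕ} (hg : g ^ n = 1) (k : ℕ) :
    g ^ (k : ZMod n).val = g ^ k := by
  rw [ZMod.val_natCast]
  conv_rhs => rw [← Nat.div_add_mod k n, pow_add, pow_mul, hg, one_pow, one_mul]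

lemma pow_mul_pow_of_mul_eq {H : Type*} [Monoid H] {a b : H} {c : ℕ} (h : a * b = b * a ^ c)
    (x k : ℕ) : a ^ x * b ^ k = b ^ k * a ^ (x * c ^ k) := by
  have h1 : SemiconjBy b (a ^ c) a := h.symm
  induction k generalizing x with
  | zero => simp
  | succ k ih =>
    have h2 : b * a ^ (c * (x * c ^ k)) = a ^ (x * c ^ k) * b := by
      rw [pow_mul]; exact h1.pow_right _
    rw [pow_succ, ← mul_assoc, ih, mul_assoc, ← h2, mul_assoc, pow_succ]
    congr 3
    ring

namespace TwistedProduct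

variable {m n c : ℕ} [NeZero m] [NeZero n] {χ : AddChar (ZMod m) (ZMod n)}

lemma exists_lift (hχ : ∀ k : ℕ, χ k = (c : ZMod n) ^ k) {H : Type*} [Group H] {a b : H}
    (ha : a ^ n = 1) (hb : b ^ m = 1) (hab : a * b = b * a ^ c) :
    ∃ φ : TwistedProduct χ →* H, ∀ x j : ℕ, φ ⟨x, j⟩ = b ^ j * a ^ x := by
  refine ⟨MonoidHom.mk' (fun g => b ^ g.j.val * a ^ g.x.val) ?_, fun x j => ?_⟩
  · rintro ⟨x, j⟩ ⟨y, k⟩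
    obtain ⟨x, rfl⟩ := ZMod.natCast_zmod_surjective x
    obtain ⟨y, rfl⟩ := ZMod.natCast_zmod_surjective y
    obtain ⟨j, rfl⟩ := ZMod.natCast_zmod_surjective j
    obtain ⟨k, rfl⟩ := ZMod.natCast_zmod_surjective k
    simp only [mul_x, mul_j, hχ]
    norm_cast
    simp only [pow_val_natCast ha, pow_val_natCast hb]
    rw [pow_add, pow_add, mul_assoc, ← mul_assoc (b ^ k), ← pow_mul_pow_of_mul_eq hab]
    simp only [mul_assoc]
  · simp only [MonoidHom.mk'_apply, pow_val_natCast ha, pow_val_natCast hb]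

end TwistedProduct

lemma nonempty_M1_mulEquiv {p d e f : ℕ} [NeZero (p ^ d)] [NeZero (p ^ e)]
    {χ : AddChar (ZMod (p ^ d)) (ZMod (p ^ e))}
    (hχ : ∀ k : ℕ, χ k = ((1 + p ^ f : ℕ) : ZMod (p ^ e)) ^ k) :
    Nonempty (M1 p d e f ≃* TwistedProduct χ) := by
  have ha : M1a p d e f ^ p ^ e = 1 := by
    simpa [M1a, PresentedGroup.of] using
      PresentedGroup.one_of_mem (rels := M1rels p d e f) (x := FreeGroup.of 0 ^ p ^ e)
        (by simp [M1rels])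
  have hb : M1b p d e f ^ p ^ d = 1 := by
    simpa [M1b, PresentedGroup.of] using
      PresentedGroup.one_of_mem (rels := M1rels p d e f) (x := FreeGroup.of 1 ^ p ^ d)
        (by simp [M1rels])
  have hab : M1a p d e f * M1b p d e f = M1b p d e f * M1a p d e f ^ (1 + p ^ f) := by
    have := PresentedGroup.one_of_mem (rels := M1rels p d e f)
      (x := (FreeGroup.of 1)⁻¹ * FreeGroup.of 0 * FreeGroup.of 1 *
        (FreeGroup.of 0 ^ (1 + p ^ f))⁻¹) (by simp [M1rels])
    simp only [map_mul, map_inv, map_pow] at this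
    rw [mul_inv_eq_one, mul_assoc, inv_mul_eq_iff_eq_mul] at this
    exact this
  obtain ⟨φ, hφ⟩ := TwistedProduct.exists_lift hχ ha hb hab
  have hrel : ∀ r ∈ M1rels p d e f,
      FreeGroup.lift (![⟨1, 0⟩, ⟨0, 1⟩] : Fin 2 → TwistedProduct χ) r = 1 := by
    have h1 : χ 1 = ((1 + p ^ f : ℕ) : ZMod (p ^ e)) := by simpa using hχ 1
    rintro r (rfl | rfl | rfl)
    · ext <;> simp [TwistedProduct.pow_x, TwistedProduct.pow_j, -Nat.cast_pow]
    · ext <;> simp [TwistedProduct.pow_x, TwistedProduct.pow_j, -Nat.cast_pow]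
    · simp only [map_mul, map_inv, map_pow, FreeGroup.lift_apply_of]
      rw [mul_inv_eq_one, mul_assoc, inv_mul_eq_iff_eq_mul]
      ext <;> simp [TwistedProduct.pow_x, TwistedProduct.pow_j, h1]
  refine ⟨MonoidHom.toMulEquiv (PresentedGroup.toGroup hrel) φ ?_ ?_⟩
  · refine PresentedGroup.ext fun i => ?_
    fin_cases i
    · simpa [M1a] using hφ 1 0
    · simpa [M1b] using hφ 0 1
  · refine MonoidHom.ext fun g => ?_
    obtain ⟨x, j⟩ := g
    obtain ⟨x, rfl⟩ := ZMod.natCast_zmod_surjective x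
    obtain ⟨j, rfl⟩ := ZMod.natCast_zmod_surjective j
    simp only [MonoidHom.comp_apply, hφ, map_mul, map_pow, M1a, M1b, PresentedGroup.toGroup.of]
    ext <;> simp [TwistedProduct.pow_x, TwistedProduct.pow_j]

end TwistedProduct

namespace TwistedProduct

section ExactPairs

variable {p d e f : ℕ} {χ : AddChar (ZMod (p ^ d)) (ZMod (p ^ e))}

lemma prime_pow_dvd_addChar_sub_one [NeZero (p ^ d)]
    (hχ : ∀ k : ℕ, χ k = ((1 + p ^ f : ℕ) : ZMod (p ^ e)) ^ k)
    (j : ZMod (p ^ d)) : (p : ZMod (p ^ e)) ^ f ∣ χ j - 1 := by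
  obtain ⟨j, rfl⟩ := ZMod.natCast_zmod_surjective j
  rw [hχ]
  refine dvd_trans ?_ (sub_one_dvd_pow_sub_one _ _)
  simp

lemma pow_prime_pow_eq_one_iff (hodd : Odd p) (hχ : ∀ j, (p : ZMod (p ^ e)) ∣ χ j - 1)
    (g : TwistedProduct χ) (k : ℕ) :
    g ^ p ^ k = 1 ↔ (p : ZMod (p ^ e)) ^ k * g.x = 0 ∧ (p : ZMod (p ^ d)) ^ k * g.j = 0 := by
  obtain ⟨z, hz⟩ := exists_geom_sum_prime_pow_eq hodd (hχ g.j) k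
  rw [TwistedProduct.ext_iff, pow_x, pow_j, hz, ← mul_assoc, one_x, one_j,
    (isUnit_one_add_prime_mul e z).mul_left_eq_zero, mul_comm, nsmul_eq_mul, Nat.cast_pow]

lemma orderOf_eq_prime_pow_of_isUnit_j (hp : p.Prime) (hodd : Odd p)
    (hχ : ∀ j, (p : ZMod (p ^ e)) ∣ χ j - 1) (hd : 0 < d) {g : TwistedProduct χ}
    (hx : (p : ZMod (p ^ e)) ^ d * g.x = 0) (hj : IsUnit g.j) : orderOf g = p ^ d := by
  have := Fact.mk hp
  obtain ⟨k, rfl⟩ : ∃ k, d = k + 1 := ⟨d - 1, by omega⟩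
  refine orderOf_eq_prime_pow (fun h => ?_) ((pow_prime_pow_eq_one_iff hodd hχ _ _).mpr ⟨hx, ?_⟩)
  · exact prime_pow_ne_zero hp (Nat.lt_succ_self k)
      (hj.mul_left_eq_zero.mp ((pow_prime_pow_eq_one_iff hodd hχ _ _).mp h).2)
  · rw [natCast_prime_pow_eq_zero le_rfl, zero_mul]

lemma orderOf_eq_prime_pow_of_isUnit_x (hp : p.Prime) (hodd : Odd p)
    (hχ : ∀ j, (p : ZMod (p ^ e)) ∣ χ j - 1) (hde : d < e) {g : TwistedProduct χ}
    (hx : IsUnit g.x) : orderOf g = p ^ e := by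
  have := Fact.mk hp
  obtain ⟨k, rfl⟩ : ∃ k, e = k + 1 := ⟨e - 1, by omega⟩
  refine orderOf_eq_prime_pow (fun h => ?_) ((pow_prime_pow_eq_one_iff hodd hχ _ _).mpr ⟨?_, ?_⟩)
  · exact prime_pow_ne_zero hp (Nat.lt_succ_self k)
      (hx.mul_left_eq_zero.mp ((pow_prime_pow_eq_one_iff hodd hχ _ _).mp h).1)
  · rw [natCast_prime_pow_eq_zero le_rfl, zero_mul]
  · rw [natCast_prime_pow_eq_zero hde.le, zero_mul]

lemma disjoint_zpowers (hp : p.Prime) {α β : TwistedProduct χ} (hde : d < e)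
    (hα : orderOf α = p ^ d) (hβ : orderOf β = p ^ e) (hj : IsUnit α.j) :
    Disjoint (Subgroup.zpowers α) (Subgroup.zpowers β) := by
  rw [Subgroup.disjoint_def]
  rintro _ ⟨i, rfl⟩ ⟨l, hl⟩
  simp only at hl ⊢
  have hstep : ∀ k : ℕ, (p ^ d : ℤ) ∣ i * p ^ (k + 1) → (p ^ d : ℤ) ∣ i * p ^ k := by
    intro k hk
    have hβ1 : β ^ (l * p ^ (k + 1)) = 1 := by
      rw [zpow_mul, hl, ← zpow_mul, ← orderOf_dvd_iff_zpow_eq_one, hα]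
      exact_mod_cast hk
    rw [← orderOf_dvd_iff_zpow_eq_one, hβ] at hβ1
    have hp0 : (p : ℤ) ≠ 0 := by exact_mod_cast hp.ne_zero
    have hl1 : (p ^ d : ℤ) ∣ l * p ^ k := by
      have h1 : (p ^ (d + 1) : ℤ) ∣ l * p ^ (k + 1) :=
        (pow_dvd_pow _ hde).trans (by exact_mod_cast hβ1)
      rw [pow_succ, pow_succ, ← mul_assoc] at h1
      exact Int.dvd_of_mul_dvd_mul_right hp0 h1
    have h2 : (α ^ (i * p ^ k : ℤ)).j = (β ^ (l * p ^ k : ℤ)).j := by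
      rw [zpow_mul, ← hl, ← zpow_mul]
    rw [zpow_j, zpow_j, zsmul_eq_mul, zsmul_eq_mul,
      (ZMod.intCast_zmod_eq_zero_iff_dvd (l * _) _).mpr (by exact_mod_cast hl1), zero_mul,
      hj.mul_left_eq_zero, ZMod.intCast_zmod_eq_zero_iff_dvd] at h2
    exact_mod_cast h2
  have hall : ∀ k : ℕ, (p ^ d : ℤ) ∣ i * p ^ k → (p ^ d : ℤ) ∣ i := by
    intro k
    induction k with
    | zero => simp
    | succ k ih => exact fun h => ih (hstep k h)
  rw [← orderOf_dvd_iff_zpow_eq_one, hα]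
  exact_mod_cast hall d (dvd_mul_left _ _)

lemma isExactBicyclicPair_iff (hp : p.Prime) (hodd : Odd p)
    (hχ : ∀ j, (p : ZMod (p ^ e)) ∣ χ j - 1) (hd : 0 < d) (hde : d < e) (α β : TwistedProduct χ) :
    IsExactBicyclicPair (p ^ d) (p ^ e) α β ↔
      (p : ZMod (p ^ e)) ^ d * α.x = 0 ∧ IsUnit α.j ∧ IsUnit β.x := by
  have : NeZero (p ^ d) := ⟨(pow_pos hp.pos d).ne'⟩
  have : NeZero (p ^ e) := ⟨(pow_pos hp.pos e).ne'⟩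
  constructor
  · rintro ⟨h1, h2, -, h4⟩
    have hαx : (p : ZMod (p ^ e)) ^ d * α.x = 0 :=
      ((pow_prime_pow_eq_one_iff hodd hχ _ _).mp (orderOf_dvd_iff_pow_eq_one.mp h1.dvd)).1
    have hβx : IsUnit β.x := by
      refine isUnit_of_prime_pow_mul_ne_zero (k := e - 1) hp (by omega) fun h => ?_
      have h3 : β ^ p ^ (e - 1) = 1 := (pow_prime_pow_eq_one_iff hodd hχ _ _).mpr
        ⟨h, by rw [natCast_prime_pow_eq_zero (by omega), zero_mul]⟩
      have h5 := orderOf_dvd_of_pow_eq_one h3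
      rw [h2, Nat.pow_dvd_pow_iff_le_right hp.one_lt] at h5
      omega
    refine ⟨hαx, ?_, hβx⟩
    let πe : ZMod (p ^ e) →+* ZMod p := ZMod.castHom (dvd_pow_self p (Nat.ne_zero_of_lt hde)) _
    let πd : ZMod (p ^ d) →+* ZMod p := ZMod.castHom (dvd_pow_self p hd.ne') _
    have hπ : ∀ x, (p : ZMod (p ^ e)) ∣ x → πe x = 0 := by
      rintro _ ⟨y, rfl⟩
      simp
    obtain ⟨i, l, hil⟩ := h4 ⟨0, 1⟩
    by_contra hα
    obtain ⟨y, hy⟩ := prime_dvd_of_not_isUnit hp hα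
    have hx := congrArg (fun g => (ringHomProj (χ := χ) πe
      (fun j => sub_eq_zero.mp (by rw [← map_one πe, ← map_sub]; exact hπ _ (hχ j))) g).toAdd) hil
    have hj := congrArg (fun g : TwistedProduct χ => πd g.j) hil
    simp only [map_mul, map_zpow, toAdd_mul, toAdd_zpow, ringHomProj_apply, toAdd_ofAdd, map_zero,
      hπ _ (prime_dvd_of_prime_pow_mul_eq_zero hp hde hαx), smul_zero, zero_add, zsmul_eq_mul] at hx
    simp only [mul_j, zpow_j, hy, zsmul_eq_mul, map_add, map_mul, map_natCast, map_intCast,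
      ((hβx.map πe).mul_left_eq_zero.mp hx.symm), CharP.cast_eq_zero, zero_mul, mul_zero, zero_add,
      map_one] at hj
    have := Fact.mk hp
    exact one_ne_zero hj
  · rintro ⟨h1, h2, h3⟩
    have hα := orderOf_eq_prime_pow_of_isUnit_j hp hodd hχ hd h1 h2
    have hβ := orderOf_eq_prime_pow_of_isUnit_x hp hodd hχ hde h3
    have hdisj := disjoint_zpowers hp hde hα hβ h2
    refine ⟨hα, hβ, hdisj.eq_bot, fun g => ?_⟩
    have hc := Subgroup.isComplement'_of_card_mul_and_disjoint (by
      rw [Nat.card_zpowers, Nat.card_zpowers, hα, hβ, natCard_eq, Nat.card_zmod, Nat.card_zmod,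
        mul_comm]) hdisj
    obtain ⟨⟨⟨_, i, rfl⟩, ⟨_, l, rfl⟩⟩, h⟩ := hc.2 g
    exact ⟨i, l, h.symm⟩

lemma card_exactBicyclicPair (hp : p.Prime) (hodd : Odd p)
    (hχ : ∀ j, (p : ZMod (p ^ e)) ∣ χ j - 1) (hd : 0 < d) (hde : d < e) :
    Nat.card {x : TwistedProduct χ × TwistedProduct χ //
        IsExactBicyclicPair (p ^ d) (p ^ e) x.1 x.2} =
      p ^ d * (p ^ (d - 1) * (p - 1)) * (p ^ (e - 1) * (p - 1)) * p ^ d := by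
  let E : {x : TwistedProduct χ × TwistedProduct χ //
      IsExactBicyclicPair (p ^ d) (p ^ e) x.1 x.2} ≃
      (({s : ZMod (p ^ e) // (p : ZMod (p ^ e)) ^ d * s = 0} × {r : ZMod (p ^ d) // IsUnit r}) ×
        {u : ZMod (p ^ e) // IsUnit u}) × ZMod (p ^ d) :=
    { toFun := fun x =>
        have h := (isExactBicyclicPair_iff hp hodd hχ hd hde _ _).mp x.2
        (((⟨x.1.1.x, h.1⟩, ⟨x.1.1.j, h.2.1⟩), ⟨x.1.2.x, h.2.2⟩), x.1.2.j)
      invFun := fun k => ⟨(⟨k.1.1.1, k.1.1.2⟩, ⟨k.1.2, k.2⟩),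
        (isExactBicyclicPair_iff hp hodd hχ hd hde _ _).mpr ⟨k.1.1.1.2, k.1.1.2.2, k.1.2.2⟩⟩
      left_inv := fun _ => rfl
      right_inv := fun _ => rfl }
  rw [Nat.card_congr E, Nat.card_prod, Nat.card_prod, Nat.card_prod,
    card_prime_pow_torsion hp hde.le, card_units_prime_pow hp hd,
    card_units_prime_pow hp (Nat.zero_lt_of_lt hde), Nat.card_zmod]

lemma orderOf_one_add_prime_pow (hp : p.Prime) (hodd : Odd p) (hf : 0 < f) (hfe : f < e) :
    orderOf ((1 + p ^ f : ℕ) : ZMod (p ^ e)) = p ^ (e - f) := by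
  have := Fact.mk hp
  have key : ∀ k : ℕ, ((1 + p ^ f : ℕ) : ZMod (p ^ e)) ^ p ^ k = 1 ↔
      (p : ZMod (p ^ e)) ^ (f + k) = 0 := fun k => by
    obtain ⟨z, hz⟩ := exists_geom_sum_prime_pow_eq (R := ZMod (p ^ e)) hodd
      (x := ((1 + p ^ f : ℕ) : ZMod (p ^ e))) (by simpa using dvd_pow_self (p : ZMod (p ^ e)) hf.ne') k
    rw [← sub_eq_zero, ← geom_sum_mul, hz]
    push_cast
    rw [add_sub_cancel_left, mul_right_comm, (isUnit_one_add_prime_mul e z).mul_left_eq_zero,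
      ← pow_add, add_comm]
  obtain ⟨k, hk⟩ : ∃ k, e - f = k + 1 := ⟨e - f - 1, by omega⟩
  rw [hk]
  refine orderOf_eq_prime_pow (fun h => ?_) ((key _).mpr (natCast_prime_pow_eq_zero (by omega)))
  exact prime_pow_ne_zero hp (by omega) ((key _).mp h)

lemma addChar_eq_one_iff (hp : p.Prime) (hodd : Odd p) (hf : 0 < f) (hfe : f < e)
    (hedf : e ≤ d + f) (hχ : ∀ k : ℕ, χ k = ((1 + p ^ f : ℕ) : ZMod (p ^ e)) ^ k)
    (r : ZMod (p ^ d)) : χ r = 1 ↔ (p : ZMod (p ^ d)) ^ (d - (e - f)) * r = 0 := by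
  have : NeZero (p ^ d) := ⟨(pow_pos hp.pos d).ne'⟩
  obtain ⟨r, rfl⟩ := ZMod.natCast_zmod_surjective r
  rw [hχ, ← orderOf_dvd_iff_pow_eq_one, orderOf_one_add_prime_pow hp hodd hf hfe, ← Nat.cast_pow,
    ← Nat.cast_mul, ZMod.natCast_eq_zero_iff]
  conv_rhs => rw [show p ^ d = p ^ (d - (e - f)) * p ^ (e - f) by rw [← pow_add]; congr 1; omega]
  rw [Nat.mul_dvd_mul_iff_left (pow_pos hp.pos _)]

lemma exists_addChar_eq (hp : p.Prime) (hodd : Odd p) (hf : 0 < f) (hfe : f < e)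
    (hχ : ∀ k : ℕ, χ k = ((1 + p ^ f : ℕ) : ZMod (p ^ e)) ^ k) {v : ZMod (p ^ e)}
    (hv : (p : ZMod (p ^ e)) ^ f ∣ v - 1) : ∃ r, χ r = v := by
  have : NeZero (p ^ e) := ⟨(pow_pos hp.pos e).ne'⟩
  have htors : ∀ w : ZMod (p ^ e), (p : ZMod (p ^ e)) ^ f ∣ w →
      (p : ZMod (p ^ e)) ^ (e - f) * w = 0 := by
    rintro _ ⟨w, rfl⟩
    rw [← mul_assoc, ← pow_add, natCast_prime_pow_eq_zero (by omega), zero_mul]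
  let c := ((1 + p ^ f : ℕ) : ZMod (p ^ e))
  let F : Fin (p ^ (e - f)) → {w : ZMod (p ^ e) // (p : ZMod (p ^ e)) ^ (e - f) * w = 0} :=
    fun i => ⟨c ^ (i : ℕ) - 1,
      htors _ (dvd_trans (by simp [c]) (sub_one_dvd_pow_sub_one c i))⟩
  have hF : Function.Injective F := fun i j hij => by
    have h : c ^ (i : ℕ) = c ^ (j : ℕ) := sub_left_injective (Subtype.ext_iff.mp hij)
    have hc := orderOf_one_add_prime_pow hp hodd hf hfe
    exact Fin.ext (pow_injOn_Iio_orderOf (hc.symm ▸ i.2) (hc.symm ▸ j.2) h)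
  obtain ⟨i, hi⟩ := (hF.bijective_of_nat_card_le (by
    rw [card_prime_pow_torsion hp (Nat.sub_le e f), Nat.card_fin])).2 ⟨v - 1, htors _ hv⟩
  exact ⟨(i : ℕ), by rw [hχ]; exact sub_left_injective (Subtype.ext_iff.mp hi)⟩

lemma card_addChar_fiber (hp : p.Prime) (hodd : Odd p) (hf : 0 < f) (hfe : f < e)
    (hedf : e ≤ d + f) (hχ : ∀ k : ℕ, χ k = ((1 + p ^ f : ℕ) : ZMod (p ^ e)) ^ k)
    {v : ZMod (p ^ e)} (hv : (p : ZMod (p ^ e)) ^ f ∣ v - 1) :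
    Nat.card {r // χ r = v} = p ^ (d - (e - f)) := by
  obtain ⟨r₀, rfl⟩ := exists_addChar_eq hp hodd hf hfe hχ hv
  rw [← card_prime_pow_torsion hp (Nat.sub_le d (e - f))]
  refine Nat.card_congr ((Equiv.subRight r₀).subtypeEquiv fun r => ?_)
  rw [Equiv.subRight_apply, ← addChar_eq_one_iff hp hodd hf hfe hedf hχ]
  conv_lhs => rw [← sub_add_cancel r r₀, AddChar.map_add_eq_mul]
  exact (χ.val_isUnit r₀).mul_eq_right

lemma isUnit_of_addChar_eq (hp : p.Prime) (hodd : Odd p) (hf : 0 < f) (hfe : f < e)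
    (hχ : ∀ j, (p : ZMod (p ^ e)) ^ f ∣ χ j - 1) {r : ZMod (p ^ d)} {m : ZMod (p ^ e)}
    (hr : χ r = 1 + (p : ZMod (p ^ e)) ^ f * (1 + p * m)) : IsUnit r := by
  by_contra h
  obtain ⟨y, rfl⟩ := prime_dvd_of_not_isUnit hp h
  obtain ⟨w, hw⟩ := hχ y
  obtain ⟨z, hz⟩ := exists_geom_sum_prime_pow_eq hodd ((dvd_pow_self _ hf.ne').trans (hχ y)) 1
  simp only [pow_one] at hz
  have h1 : χ (p * y) - 1 = (p : ZMod (p ^ e)) ^ (f + 1) * ((1 + p * z) * w) := by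
    rw [← nsmul_eq_mul, AddChar.map_nsmul_eq_pow, ← geom_sum_mul, hw, hz]
    ring
  rw [hr, add_sub_cancel_left] at h1
  have h2 := congrArg (fun x => (p : ZMod (p ^ e)) ^ (e - f - 1) * x) h1
  simp only [← mul_assoc, ← pow_add] at h2
  rw [natCast_prime_pow_eq_zero (show e ≤ e - f - 1 + (f + 1) by omega), zero_mul, zero_mul,
    (isUnit_one_add_prime_mul e m).mul_left_eq_zero] at h2
  exact prime_pow_ne_zero hp (by omega) h2

lemma exists_geom_sum_addChar_eq (hodd : Odd p) (hf : 0 < f)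
    (hχ : ∀ j, (p : ZMod (p ^ e)) ^ f ∣ χ j - 1) (t : ZMod (p ^ d)) {s : ZMod (p ^ e)}
    (hs : (p : ZMod (p ^ e)) ∣ s) :
    ∃ m, ∑ i ∈ Finset.range (1 + p ^ f), χ t ^ i + s * (χ t - 1) =
      1 + (p : ZMod (p ^ e)) ^ f * (1 + p * m) := by
  obtain ⟨s, rfl⟩ := hs
  obtain ⟨z, hz⟩ := exists_geom_sum_prime_pow_eq hodd ((dvd_pow_self _ hf.ne').trans (hχ t)) f
  obtain ⟨w, hw⟩ := hχ t
  obtain ⟨k, rfl⟩ : ∃ k, f = k + 1 := ⟨f - 1, by omega⟩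
  refine ⟨z + p ^ k * w * (1 + p * z) + s * w, ?_⟩
  rw [add_comm 1, geom_sum_succ, hz, hw, sub_eq_iff_eq_add.mp hw]
  ring

lemma mul_eq_mul_pow_iff (α β : TwistedProduct χ) (hβ : IsUnit β.x) :
    β * α = α * β ^ (1 + p ^ f) ↔
      (p : ZMod (p ^ d)) ^ f * β.j = 0 ∧
        χ α.j = ∑ i ∈ Finset.range (1 + p ^ f), χ β.j ^ i +
          (↑hβ.unit⁻¹ * α.x) * (χ β.j - 1) := by
  have hj : (β * α).j = (α * β ^ (1 + p ^ f)).j ↔ (p : ZMod (p ^ d)) ^ f * β.j = 0 := by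
    rw [mul_j, mul_j, pow_j, add_comm, add_right_inj, add_nsmul, one_nsmul, left_eq_add,
      nsmul_eq_mul, Nat.cast_pow]
  rw [TwistedProduct.ext_iff, hj, and_comm]
  refine and_congr_right fun h => ?_
  have hpow : (β ^ (1 + p ^ f)).j = β.j := by
    rw [pow_j, add_nsmul, one_nsmul, nsmul_eq_mul, Nat.cast_pow, h, add_zero]
  rw [mul_x, mul_x, hpow, pow_x, ← hβ.mul_right_inj (b := χ α.j)]
  have hu : β.x * ↑hβ.unit⁻¹ = 1 := hβ.mul_val_inv
  constructor <;> intro h'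
  · linear_combination h' - α.x * (χ β.j - 1) * hu
  · linear_combination h' + α.x * (χ β.j - 1) * hu

lemma card_exactBicyclicPair_of_relation (hp : p.Prime) (hodd : Odd p)
    (hχ : ∀ k : ℕ, χ k = ((1 + p ^ f : ℕ) : ZMod (p ^ e)) ^ k) (hd : 0 < d) (hf : 0 < f)
    (hde : d < e) (hfe : f < e) (hedf : e ≤ d + f) :
    Nat.card {x : TwistedProduct χ × TwistedProduct χ //
        IsExactBicyclicPair (p ^ d) (p ^ e) x.1 x.2 ∧ x.2 * x.1 = x.1 * x.2 ^ (1 + p ^ f)} =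
      p ^ d * (p ^ (e - 1) * (p - 1)) * p ^ min f d * p ^ (d - (e - f)) := by
  have : NeZero (p ^ d) := ⟨(pow_pos hp.pos d).ne'⟩
  have : NeZero (p ^ e) := ⟨(pow_pos hp.pos e).ne'⟩
  have hχf := prime_pow_dvd_addChar_sub_one hχ
  have hχ1 := fun j => (dvd_pow_self (p : ZMod (p ^ e)) hf.ne').trans (hχf j)
  let K := ({s : ZMod (p ^ e) // (p : ZMod (p ^ e)) ^ d * s = 0} × {u : ZMod (p ^ e) // IsUnit u}) ×
    {t : ZMod (p ^ d) // (p : ZMod (p ^ d)) ^ f * t = 0}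
  let v : K → ZMod (p ^ e) := fun k =>
    ∑ i ∈ Finset.range (1 + p ^ f), χ k.2.1 ^ i + (↑k.1.2.2.unit⁻¹ * k.1.1.1) * (χ k.2.1 - 1)
  have hv : ∀ k, ∃ m, v k = 1 + (p : ZMod (p ^ e)) ^ f * (1 + p * m) := fun k =>
    exists_geom_sum_addChar_eq hodd hf hχf _
      ((prime_dvd_of_prime_pow_mul_eq_zero hp hde k.1.1.2).mul_left _)
  let E : {x : TwistedProduct χ × TwistedProduct χ //
      IsExactBicyclicPair (p ^ d) (p ^ e) x.1 x.2 ∧ x.2 * x.1 = x.1 * x.2 ^ (1 + p ^ f)} ≃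
      Σ k : K, {r // χ r = v k} :=
    { toFun := fun x =>
        have h := (isExactBicyclicPair_iff hp hodd hχ1 hd hde _ _).mp x.2.1
        have h' := (mul_eq_mul_pow_iff x.1.1 x.1.2 h.2.2).mp x.2.2
        ⟨((⟨x.1.1.x, h.1⟩, ⟨x.1.2.x, h.2.2⟩), ⟨x.1.2.j, h'.1⟩), x.1.1.j, h'.2⟩
      invFun := fun k => ⟨(⟨k.1.1.1, k.2⟩, ⟨k.1.1.2, k.1.2⟩),
        (isExactBicyclicPair_iff hp hodd hχ1 hd hde _ _).mpr
          ⟨k.1.1.1.2, isUnit_of_addChar_eq hp hodd hf hfe hχf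
            (k.2.2.trans (hv k.1).choose_spec), k.1.1.2.2⟩,
        (mul_eq_mul_pow_iff _ _ k.1.1.2.2).mpr ⟨k.1.2.2, k.2.2⟩⟩
      left_inv := fun _ => rfl
      right_inv := fun _ => rfl }
  have ht : Nat.card {t : ZMod (p ^ d) // (p : ZMod (p ^ d)) ^ f * t = 0} = p ^ min f d := by
    rw [← card_prime_pow_torsion hp (min_le_right f d)]
    refine Nat.card_congr (Equiv.subtypeEquivRight fun t => ?_)
    rcases le_total f d with h | h
    · rw [min_eq_left h]
    · rw [min_eq_right h, natCast_prime_pow_eq_zero h, natCast_prime_pow_eq_zero le_rfl]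
  have hfib : ∀ k, Nat.card {r // χ r = v k} = p ^ (d - (e - f)) := fun k => by
    obtain ⟨m, hm⟩ := hv k
    exact card_addChar_fiber hp hodd hf hfe hedf hχ
      (by rw [hm, add_sub_cancel_left]; exact dvd_mul_right _ _)
  have := Fintype.ofFinite K
  rw [Nat.card_congr E, Nat.card_sigma, Finset.sum_congr rfl fun k _ => hfib k, Finset.sum_const,
    Finset.card_univ, ← Nat.card_eq_fintype_card, Nat.card_prod, Nat.card_prod, ht,
    card_prime_pow_torsion hp hde.le, card_units_prime_pow hp (Nat.zero_lt_of_lt hde), smul_eq_mul]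

end ExactPairs

end TwistedProduct

lemma exists_addChar (p d e f : ℕ) [NeZero (p ^ d)] (hodd : Odd p) (hf : 0 < f)
    (hedf : e ≤ d + f) :
    ∃ χ : AddChar (ZMod (p ^ d)) (ZMod (p ^ e)),
      ∀ k : ℕ, χ k = ((1 + p ^ f : ℕ) : ZMod (p ^ e)) ^ k := by
  have h : ((1 + p ^ f : ℕ) : ZMod (p ^ e)) ^ p ^ d = 1 := by
    obtain ⟨z, hz⟩ := exists_geom_sum_prime_pow_eq (R := ZMod (p ^ e)) hodd
      (x := ((1 + p ^ f : ℕ) : ZMod (p ^ e)))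
      (by simpa using dvd_pow_self (p : ZMod (p ^ e)) hf.ne') d
    rw [← sub_eq_zero, ← geom_sum_mul, hz]
    push_cast
    rw [add_sub_cancel_left, mul_right_comm, ← pow_add, natCast_prime_pow_eq_zero hedf, zero_mul]
  exact ⟨AddChar.zmodChar (p ^ d) h, AddChar.zmodChar_apply' h⟩

lemma card_M1_quotient_mul {p d e f : ℕ} (hp : p.Prime) (hodd : Odd p) (hd : 0 < d) (hf : 0 < f)
    (hde : d < e) {χ : AddChar (ZMod (p ^ d)) (ZMod (p ^ e))}
    (hχ : ∀ k : ℕ, χ k = ((1 + p ^ f : ℕ) : ZMod (p ^ e)) ^ k) :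
    Nat.card (Quotient (bicyclicPairSetoid (M1 p d e f) (p ^ d) (p ^ e))) *
        Nat.card {x : TwistedProduct χ × TwistedProduct χ //
          IsExactBicyclicPair (p ^ d) (p ^ e) x.1 x.2 ∧ x.2 * x.1 = x.1 * x.2 ^ (1 + p ^ f)} =
      Nat.card {x : TwistedProduct χ × TwistedProduct χ //
        IsExactBicyclicPair (p ^ d) (p ^ e) x.1 x.2} := by
  have : NeZero (p ^ d) := ⟨(pow_pos hp.pos d).ne'⟩
  have : NeZero (p ^ e) := ⟨(pow_pos hp.pos e).ne'⟩
  have hχ1 := fun j => (dvd_pow_self (p : ZMod (p ^ e)) hf.ne').trans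
    (TwistedProduct.prime_pow_dvd_addChar_sub_one hχ j)
  obtain ⟨ψ⟩ := nonempty_M1_mulEquiv hχ
  rw [card_bicyclicPair_quotient_congr _ _ ψ, card_bicyclicPair_eq_mul]
  congr 1
  symm
  refine card_mulAut_eq_card_bicyclicPair (a := ⟨1, 0⟩) (b := ⟨0, 1⟩) _
    ((TwistedProduct.isExactBicyclicPair_iff hp hodd hχ1 hd hde _ _).mpr
      ⟨mul_zero _, isUnit_one, isUnit_one⟩) ?_ fun A B hA hB hAB => ?_
  · have h1 := hχ 1
    simp only [Nat.cast_one, pow_one] at h1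
    ext <;> simp [TwistedProduct.pow_x, TwistedProduct.pow_j, h1]
  · obtain ⟨φ, hφ⟩ := TwistedProduct.exists_lift hχ hA hB hAB
    exact ⟨φ, by simpa using hφ 1 0, by simpa using hφ 0 1⟩

lemma card_M1_quotient_of_lt {p d e f k : ℕ} (hp : p.Prime) (hodd : Odd p) (hd : 0 < d)
    (hf : 0 < f) (hde : d < e) (hfe : f < e) (hedf : e ≤ d + f)
    (hk : k + min f d + f + 1 = d + e) :
    Nat.card (Quotient (bicyclicPairSetoid (M1 p d e f) (p ^ d) (p ^ e))) = p ^ k * (p - 1) := by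
  have : NeZero (p ^ d) := ⟨(pow_pos hp.pos d).ne'⟩
  obtain ⟨χ, hχ⟩ := exists_addChar p d e f hodd hf hedf
  have hχ1 := fun j => (dvd_pow_self (p : ZMod (p ^ e)) hf.ne').trans
    (TwistedProduct.prime_pow_dvd_addChar_sub_one hχ j)
  have h := card_M1_quotient_mul hp hodd hd hf hde hχ
  rw [TwistedProduct.card_exactBicyclicPair hp hodd hχ1 hd hde,
    TwistedProduct.card_exactBicyclicPair_of_relation hp hodd hχ hd hf hde hfe hedf] at h
  have hp1 : 0 < p - 1 := Nat.sub_pos_of_lt hp.one_lt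
  have hpos : 0 < p ^ d * (p ^ (e - 1) * (p - 1)) * p ^ min f d * p ^ (d - (e - f)) := by
    have := hp.pos
    positivity
  refine Nat.eq_of_mul_eq_mul_right hpos (h.trans ?_)
  have hexp : p ^ (d - 1) * p ^ d = p ^ k * p ^ min f d * p ^ (d - (e - f)) := by
    rw [← pow_add, ← pow_add, ← pow_add]
    congr 1
    omega
  linear_combination p ^ d * p ^ (e - 1) * (p - 1) * (p - 1) * hexp

lemma card_M1_quotient_of_eq {p d e : ℕ} (hp : p.Prime) (hodd : Odd p) (hd : 0 < d)
    (hde : d < e) :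
    Nat.card (Quotient (bicyclicPairSetoid (M1 p d e e) (p ^ d) (p ^ e))) = 1 := by
  have : NeZero (p ^ d) := ⟨(pow_pos hp.pos d).ne'⟩
  have he : 0 < e := hd.trans hde
  obtain ⟨χ, hχ⟩ := exists_addChar p d e e hodd he (Nat.le_add_left e d)
  have hχ0 : ∀ j, χ j = 1 := fun j => by
    obtain ⟨j, rfl⟩ := ZMod.natCast_zmod_surjective j
    rw [hχ, Nat.cast_add, ZMod.natCast_self, Nat.cast_one, add_zero, one_pow]
  have hχ1 : ∀ j, (p : ZMod (p ^ e)) ∣ χ j - 1 := fun j => by simp [hχ0]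
  have h := card_M1_quotient_mul hp hodd hd he hde hχ
  have hrel : ∀ x : TwistedProduct χ × TwistedProduct χ,
      IsExactBicyclicPair (p ^ d) (p ^ e) x.1 x.2 ∧ x.2 * x.1 = x.1 * x.2 ^ (1 + p ^ e) ↔
        IsExactBicyclicPair (p ^ d) (p ^ e) x.1 x.2 := fun x => by
    refine and_iff_left_of_imp fun hx => ?_
    rw [pow_add, orderOf_dvd_iff_pow_eq_one.mp hx.2.1.dvd, mul_one, pow_one]
    ext <;> simp [hχ0, add_comm]
  rw [Nat.card_congr (Equiv.subtypeEquivRight hrel),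
    TwistedProduct.card_exactBicyclicPair hp hodd hχ1 hd hde] at h
  have hp1 : 0 < p - 1 := Nat.sub_pos_of_lt hp.one_lt
  have hp0 := hp.pos
  exact Nat.eq_of_mul_eq_mul_right (by positivity) (h.trans (one_mul _).symm)

/-- For `G = M₁(p,d,e,f)` with `d < e`, `f ≤ e ≤ d + f`, the number of
orbits of `Aut(G)` acting componentwise on the exact `(p^d,p^e)`-bicyclic pairs of `G` is:
`1` if `d < f = e`; `p^(e-f-1)(p-1)` if `d ≤ f < e`; and `p^(d+e-2f-1)(p-1)` if `f < d`. -/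
theorem stmt_17 (p d e f : ℕ) (hp : p.Prime) (hodd : Odd p)
    (hd : 0 < d) (hf : 0 < f) (hde : d < e) (hfe : f ≤ e) (hedf : e ≤ d + f) :
    (d < f ∧ f = e →
      Nat.card (Quotient (bicyclicPairSetoid (M1 p d e f) (p ^ d) (p ^ e))) = 1) ∧
    (d ≤ f ∧ f < e →
      Nat.card (Quotient (bicyclicPairSetoid (M1 p d e f) (p ^ d) (p ^ e))) =
        p ^ (e - f - 1) * (p - 1)) ∧
    (f < d →
      Nat.card (Quotient (bicyclicPairSetoid (M1 p d e f) (p ^ d) (p ^ e))) =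
        p ^ (d + e - 2 * f - 1) * (p - 1)) := by
  refine ⟨?_, ?_, ?_⟩
  · rintro ⟨-, rfl⟩
    exact card_M1_quotient_of_eq hp hodd hd hde
  · rintro ⟨hdf, hfe⟩
    exact card_M1_quotient_of_lt hp hodd hd hf hde hfe hedf (by omega)
  · intro hfd
    exact card_M1_quotient_of_lt hp hodd hd hf hde (hfd.trans hde) hedf (by omega)
end
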